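/- Let N(t) = #{(a,b,w) ∈ ℤ³ : (a²+b²)² + w² < t⁴} be the number of integer lattice points in the ball of radius t for the Cygan–Korányi norm N_{4,1}(z,w) = (|z|⁴ + w²)^{1/4} on the first Heisenberg group. Then limsup_{t→∞} (N(t) − (π²/2)t⁴)/t² = +∞ and liminf_{t→∞} (N(t) − (π²/2)t⁴)/t² = −∞. -/

import Mathlib

open Real

/-- `N(t)`: the number of integer lattice points `(a,b,w) ∈ ℤ³` in the ball of
radius `t` for the Cygan–Korányi norm `N_{4,1}(z,w) = (|z|⁴ + w²)^{1/4}` on the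
first Heisenberg group, i.e. points with `(a² + b²)² + w² < t⁴`. -/
noncomputable def N (t : ℝ) : ℕ :=
  Set.ncard {p : ℤ × ℤ × ℤ |
    (((p.1 : ℝ) ^ 2 + (p.2.1 : ℝ) ^ 2) ^ 2 + (p.2.2 : ℝ) ^ 2) < t ^ 4}

open ArithmeticFunction.vonMangoldt Filter Topology in
theorem heis_not_summable_primes :
    ¬ Summable fun n : ℕ ↦ (if n.Prime ∧ ((n : ZMod 4) = 1) then (1 : ℝ) / n else 0) := by
  intro H
  have ha : IsUnit (1 : ZMod 4) := isUnit_one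
  obtain ⟨C, hC⟩ := LSeries_residueClass_lower_bound (q := 4) ha
  have hb := (summable_residueClass_non_primes_div (1 : ZMod 4)).add H
  have hT : Tendsto (fun ε : ℝ ↦ ∑' n : ℕ, ε * (residueClass (1 : ZMod 4) n / (n : ℝ) ^ (1 + ε)))
      (𝓝[>] 0) (𝓝 (∑' n : ℕ, 0)) := by
    refine tendsto_tsum_of_dominated_convergence hb ?_ ?_
    · intro n
      rcases n.eq_zero_or_pos with rfl | hn
      · simp
      have hn' : (0 : ℝ) < n := by exact_mod_cast hn
      have : Tendsto (fun ε : ℝ ↦ ε * (residueClass (1 : ZMod 4) n / (n : ℝ) ^ (1 + ε)))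
        (𝓝 0) (𝓝 (0 * (residueClass (1 : ZMod 4) n / (n : ℝ) ^ (1 + (0:ℝ))))) := by
        refine Tendsto.mul tendsto_id (Tendsto.div tendsto_const_nhds ?_ (by positivity))
        refine Tendsto.rpow tendsto_const_nhds (tendsto_const_nhds.add tendsto_id) (Or.inl hn'.ne')
      rw [zero_mul] at this
      exact this.mono_left nhdsWithin_le_nhds
    · have : Set.Ioc (0 : ℝ) 1 ∈ 𝓝[>] (0 : ℝ) := Ioc_mem_nhdsGT one_pos
      filter_upwards [this] with ε hε n
      rcases n.eq_zero_or_pos with rfl | hn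
      · simp
      have hn' : (0 : ℝ) < n := by exact_mod_cast hn
      have hn1 : (1 : ℝ) ≤ n := by exact_mod_cast hn
      have h0 := residueClass_nonneg (1 : ZMod 4) n
      have hp : (1 : ℝ) ≤ (n : ℝ) ^ ε := Real.one_le_rpow hn1 hε.1.le
      have hε0 := hε.1
      rw [Real.norm_of_nonneg (by positivity), Real.rpow_add hn', Real.rpow_one]
      by_cases hpr : n.Prime
      · by_cases hc : (n : ZMod 4) = 1
        · have : residueClass (1 : ZMod 4) n = Real.log n := by
            simp [residueClass, hc, ArithmeticFunction.vonMangoldt_apply_prime hpr]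
          simp only [hpr, hc, this, if_true, and_self, zero_div, zero_add]
          have hl : ε * Real.log n ≤ (n : ℝ) ^ ε := by
            have := Real.log_le_rpow_div hn'.le hε0
            rw [le_div_iff₀ hε0] at this
            linarith
          rw [← mul_div_assoc, div_le_div_iff₀ (by positivity) hn']
          nlinarith
        · simp [residueClass, hc]
      · simp only [hpr, if_false, false_and, add_zero]
        rw [← mul_div_assoc, div_le_div_iff₀ (by positivity) hn']
        have : ε * residueClass (1 : ZMod 4) n ≤ residueClass (1 : ZMod 4) n * (n : ℝ) ^ ε := by
          have := hε.2
          nlinarith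
        nlinarith
  rw [tsum_zero] at hT
  have hL : Tendsto (fun ε : ℝ ↦ (Nat.totient 4 : ℝ)⁻¹ - C * ε) (𝓝[>] 0)
      (𝓝 ((Nat.totient 4 : ℝ)⁻¹ - C * 0)) := by
    have : Continuous (fun ε : ℝ ↦ (Nat.totient 4 : ℝ)⁻¹ - C * ε) := by fun_prop
    exact (this.tendsto 0).mono_left nhdsWithin_le_nhds
  have := le_of_tendsto_of_tendsto hL hT (by
    have : Set.Ioc (0 : ℝ) 1 ∈ 𝓝[>] (0 : ℝ) := Ioc_mem_nhdsGT one_pos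
    filter_upwards [this] with ε hε
    have h := hC (x := 1 + ε) ⟨by linarith [hε.1], by linarith [hε.2]⟩
    rw [tsum_mul_left]
    have h2 := mul_le_mul_of_nonneg_left h hε.1.le
    refine le_trans (le_of_eq ?_) h2
    have := hε.1.ne'
    rw [add_sub_cancel_left]
    field_simp)
  have h4 : (0 : ℝ) < (Nat.totient 4 : ℝ)⁻¹ := by
    have : 0 < Nat.totient 4 := Nat.totient_pos.2 (by norm_num)
    positivity
  linarith

theorem heis_primes_large (B : ℝ) : ∃ P : Finset ℕ, (∀ p ∈ P, p.Prime ∧ p % 4 = 1) ∧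
    B < ∑ p ∈ P, (1 : ℝ) / p := by
  by_contra! h
  apply heis_not_summable_primes
  refine summable_of_sum_le (c := B) (fun n ↦ by positivity) ?_
  intro u
  rw [← Finset.sum_filter]
  apply h
  intro p hp
  rw [Finset.mem_filter] at hp
  refine ⟨hp.2.1, ?_⟩
  have := hp.2.2
  have h1 : ((p : ℕ) : ZMod 4) = ((1 : ℕ) : ZMod 4) := by simpa using this
  rw [ZMod.natCast_eq_natCast_iff'] at h1
  simpa using h1

/-- If `K` is a subfield and `x ∈ K(√q)` then `x = a + b √q`. -/
theorem heis_adjoin_sqrt (K : Subfield ℝ) (q : ℝ) (hq : 0 ≤ q) (hqK : q ∈ K) :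
    ∃ L : Subfield ℝ, K ≤ L ∧ √q ∈ L ∧ ∀ x ∈ L, ∃ a ∈ K, ∃ b ∈ K, x = a + b * √q := by
  by_cases h : √q ∈ K
  · exact ⟨K, le_rfl, h, fun x hx ↦ ⟨x, hx, 0, K.zero_mem, by ring⟩⟩
  have hs : √q * √q = q := Real.mul_self_sqrt hq
  refine ⟨{ carrier := {x | ∃ a ∈ K, ∃ b ∈ K, x = a + b * √q}
            mul_mem' := ?_, one_mem' := ?_, add_mem' := ?_, zero_mem' := ?_, neg_mem' := ?_,
            inv_mem' := ?_ }, ?_, ?_, ?_⟩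
  · rintro x y ⟨a, ha, b, hb, rfl⟩ ⟨c, hc, d, hd, rfl⟩
    refine ⟨a * c + b * d * q, K.add_mem (K.mul_mem ha hc) (K.mul_mem (K.mul_mem hb hd) hqK),
      a * d + b * c, K.add_mem (K.mul_mem ha hd) (K.mul_mem hb hc), ?_⟩
    linear_combination b * d * hs
  · exact ⟨1, K.one_mem, 0, K.zero_mem, by ring⟩
  · rintro x y ⟨a, ha, b, hb, rfl⟩ ⟨c, hc, d, hd, rfl⟩
    exact ⟨a + c, K.add_mem ha hc, b + d, K.add_mem hb hd, by ring⟩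
  · exact ⟨0, K.zero_mem, 0, K.zero_mem, by ring⟩
  · rintro x ⟨a, ha, b, hb, rfl⟩
    exact ⟨-a, K.neg_mem ha, -b, K.neg_mem hb, by ring⟩
  · rintro x ⟨a, ha, b, hb, rfl⟩
    by_cases hz : a ^ 2 - b ^ 2 * q = 0
    · have hb0 : b = 0 := by
        by_contra hb0
        have h1 : (a / b) ^ 2 = q := by field_simp; linarith
        apply h
        rw [← h1, Real.sqrt_sq_eq_abs]
        rcases abs_choice (a / b) with h2 | h2 <;> rw [h2]
        · exact K.div_mem ha hb
        · exact K.neg_mem (K.div_mem ha hb)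
      subst hb0
      exact ⟨a⁻¹, K.inv_mem ha, 0, K.zero_mem, by simp⟩
    · have hD : a ^ 2 - b ^ 2 * q ∈ K :=
        K.sub_mem (K.pow_mem ha 2) (K.mul_mem (K.pow_mem hb 2) hqK)
      refine ⟨a / (a ^ 2 - b ^ 2 * q), K.div_mem ha hD, -b / (a ^ 2 - b ^ 2 * q),
        K.div_mem (K.neg_mem hb) hD, ?_⟩
      have hne : a + b * √q ≠ 0 := by
        intro h0
        apply hz
        have : (a + b * √q) * (a - b * √q) = a ^ 2 - b ^ 2 * q := by linear_combination -b^2 * hs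
        rw [← this, h0, zero_mul]
      refine inv_eq_of_mul_eq_one_right ?_
      field_simp
      linear_combination -b^2 * hs
  · intro x hx
    exact ⟨x, hx, 0, K.zero_mem, by ring⟩
  · exact ⟨0, K.zero_mem, 1, K.one_mem, by ring⟩
  · intro x hx
    exact hx

theorem heis_sqrt_field (P : Finset ℕ) :
    ∃ K : Subfield ℝ, (∀ p ∈ P, √(p : ℝ) ∈ K) ∧
      ∀ r : ℕ, √(r : ℝ) ∈ K → ∃ S ⊆ P, IsSquare (r * ∏ p ∈ S, p) := by
  classical
  induction P using Finset.induction_on with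
  | empty =>
    refine ⟨(algebraMap ℚ ℝ).fieldRange, by simp, ?_⟩
    rintro r ⟨x, hx⟩
    refine ⟨∅, le_rfl, ?_⟩
    simp only [Finset.prod_empty, mul_one]
    by_contra hr
    have := (irrational_sqrt_natCast_iff (n := r)).2 hr
    exact this ⟨x, hx⟩
  | insert q P hq ih =>
    obtain ⟨K, hK1, hK2⟩ := ih
    obtain ⟨L, hKL, hqL, hL⟩ := heis_adjoin_sqrt K (q : ℝ) (by positivity) (natCast_mem K q)
    refine ⟨L, ?_, ?_⟩
    · intro p hp
      rcases Finset.mem_insert.1 hp with rfl | hp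
      · exact hqL
      · exact hKL (hK1 p hp)
    · intro r hr
      by_cases hqK : √(q : ℝ) ∈ K
      · obtain ⟨a, ha, b, hb, hab⟩ := hL _ hr
        have : √(r : ℝ) ∈ K := by rw [hab]; exact K.add_mem ha (K.mul_mem hb hqK)
        obtain ⟨S, hS, h⟩ := hK2 r this
        exact ⟨S, hS.trans (Finset.subset_insert _ _), h⟩
      obtain ⟨a, ha, b, hb, hab⟩ := hL _ hr
      have hs : √(q : ℝ) * √(q : ℝ) = q := Real.mul_self_sqrt (by positivity)
      have hs' : √(r : ℝ) * √(r : ℝ) = r := Real.mul_self_sqrt (by positivity)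
      by_cases hb0 : b = 0
      · have : √(r : ℝ) ∈ K := by rw [hab, hb0]; simpa using ha
        obtain ⟨S, hS, h⟩ := hK2 r this
        exact ⟨S, hS.trans (Finset.subset_insert _ _), h⟩
      by_cases ha0 : a = 0
      · have : √((r * q : ℕ) : ℝ) ∈ K := by
          push_cast
          rw [Real.sqrt_mul (by positivity), hab, ha0]
          have : (0 + b * √(q : ℝ)) * √(q : ℝ) = b * q := by linear_combination b * hs
          rw [this]
          exact K.mul_mem hb (natCast_mem K q)
        obtain ⟨S, hS, h⟩ := hK2 _ this
        refine ⟨insert q S, Finset.insert_subset_insert _ hS, ?_⟩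
        rw [Finset.prod_insert (fun h ↦ hq (hS h))]
        rwa [← mul_assoc]
      · exfalso
        apply hqK
        have : √(q : ℝ) = (r - a ^ 2 - b ^ 2 * q) / (2 * a * b) := by
          field_simp
          have h2 : (a + b * √(q : ℝ)) * (a + b * √(q : ℝ)) = r := by rw [← hab]; exact hs'
          linear_combination h2 - b ^ 2 * hs
        rw [this]
        refine K.div_mem (K.sub_mem (K.sub_mem (natCast_mem K r) (K.pow_mem ha 2))
          (K.mul_mem (K.pow_mem hb 2) (natCast_mem K q)))
          (K.mul_mem (K.mul_mem (by exact_mod_cast natCast_mem K 2) ha) hb)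

theorem heis_sqrt_prime_notMem (P : Finset ℕ) (hP : ∀ p ∈ P, p.Prime) :
    ∃ K : Subfield ℝ, (∀ p ∈ P, √(p : ℝ) ∈ K) ∧
      ∀ r : ℕ, r.Prime → r ∉ P → √(r : ℝ) ∉ K := by
  obtain ⟨K, h1, h2⟩ := heis_sqrt_field P
  refine ⟨K, h1, fun r hr hrP hK ↦ ?_⟩
  obtain ⟨S, hS, x, hx⟩ := h2 r hK
  have h3 : r ∣ x := by
    have : r ∣ x * x := by rw [← hx]; exact dvd_mul_right _ _
    exact (hr.dvd_mul.1 this).elim id id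
  obtain ⟨y, rfl⟩ := h3
  have h4 : ∏ p ∈ S, p = r * (y * y) := by
    have := hr.pos
    apply Nat.eq_of_mul_eq_mul_left this
    rw [hx]; ring
  have h5 : r ∣ ∏ p ∈ S, p := by rw [h4]; exact dvd_mul_right _ _
  obtain ⟨p, hp, hrp⟩ := (Nat.Prime.prime hr).exists_mem_finset_dvd h5
  have := (Nat.prime_dvd_prime_iff_eq hr (hP p (hS hp))).1 hrp
  subst this
  exact hrP (hS hp)

theorem heis_indep (P : Finset ℕ) (hP : ∀ p ∈ P, p.Prime) (f : ℕ → ℤ) (n : ℕ)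
    (h : (∑ p ∈ P, (f p : ℝ) * √(p : ℝ)) ^ 2 = n) :
    ∀ p ∈ P, ∀ q ∈ P, p ≠ q → f p = 0 ∨ f q = 0 := by
  classical
  intro p hp q hq hpq
  by_contra! hne
  have hfp : (f p : ℝ) ≠ 0 := by exact_mod_cast hne.1
  have hfq : (f q : ℝ) ≠ 0 := by exact_mod_cast hne.2
  have hss : √(p : ℝ) * √(p : ℝ) = p := Real.mul_self_sqrt (by positivity)
  obtain ⟨K, hK1, hK2⟩ := heis_sqrt_prime_notMem (P.erase p)
    (fun r hr ↦ hP r (Finset.mem_of_mem_erase hr))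
  have hpK : √(p : ℝ) ∉ K := hK2 p (hP p hp) (by simp)
  set c := ∑ r ∈ P.erase p, (f r : ℝ) * √(r : ℝ) with hc
  have hcK : c ∈ K := by
    refine K.sum_mem fun r hr ↦ K.mul_mem (intCast_mem K _) (hK1 r hr)
  have hsum : ∑ r ∈ P, (f r : ℝ) * √(r : ℝ) = f p * √(p : ℝ) + c := by
    rw [hc, Finset.add_sum_erase P (fun r ↦ (f r : ℝ) * √(r : ℝ)) hp]
  rw [hsum] at h
  by_cases hc0 : c = 0
  · -- now `√q` is in a smaller field
    obtain ⟨K', hK1', hK2'⟩ := heis_sqrt_prime_notMem ((P.erase p).erase q)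
      (fun r hr ↦ hP r (Finset.mem_of_mem_erase (Finset.mem_of_mem_erase hr)))
    apply hK2' q (hP q hq) (by simp)
    have hq' : q ∈ P.erase p := Finset.mem_erase.2 ⟨hpq.symm, hq⟩
    have := Finset.add_sum_erase (P.erase p) (fun r ↦ (f r : ℝ) * √(r : ℝ)) hq'
    rw [← hc, hc0] at this
    have h2 : √(q : ℝ) = -(∑ r ∈ (P.erase p).erase q, (f r : ℝ) * √(r : ℝ)) / f q := by
      field_simp
      linarith
    rw [h2]
    exact K'.div_mem (K'.neg_mem (K'.sum_mem fun r hr ↦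
      K'.mul_mem (intCast_mem K' _) (hK1' r hr))) (intCast_mem K' _)
  · apply hpK
    have : √(p : ℝ) = (n - c ^ 2 - f p ^ 2 * p) / (2 * c * f p) := by
      field_simp
      linear_combination h - (f p : ℝ) ^ 2 * hss
    rw [this]
    refine K.div_mem (K.sub_mem (K.sub_mem (natCast_mem K n) (K.pow_mem hcK 2))
      (K.mul_mem (K.pow_mem (intCast_mem K _) 2) (natCast_mem K p)))
      (K.mul_mem (K.mul_mem (by exact_mod_cast natCast_mem K 2) hcK) (intCast_mem K _))

open MeasureTheory Set in
theorem heis_gauss_moment (n : ℕ) (b : ℝ) (hb : 0 < b) :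
    ∫⁻ y in Ioi (0:ℝ), ENNReal.ofReal (y ^ n * exp (-(b * y ^ 2))) =
      ENNReal.ofReal (b ^ (-((n:ℝ) + 1) / 2) * (1 / 2) * Real.Gamma (((n:ℝ) + 1) / 2)) := by
  have hn : (-1 : ℝ) < n := by have : (0:ℝ) ≤ n := by positivity
                               linarith
  rw [← integral_rpow_mul_exp_neg_mul_rpow (p := 2) (q := n) two_pos hn hb,
    ofReal_integral_eq_lintegral_ofReal (integrableOn_rpow_mul_exp_neg_mul_rpow hn two_pos hb)]
  · refine setLIntegral_congr_fun measurableSet_Ioi fun y _ ↦ ?_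
    simp only [rpow_natCast, rpow_two, neg_mul]
  · refine (ae_restrict_iff' measurableSet_Ioi).2 (Filter.Eventually.of_forall fun y hy ↦ ?_)
    have : (0:ℝ) < y := hy
    simp only [Pi.zero_apply]
    positivity

open MeasureTheory Set in
theorem heis_sub_sym (s t : ℝ) (hs : 0 < s) (ht : 0 < t) :
    ∫⁻ v in Ioi (0:ℝ), ENNReal.ofReal (t * exp (-(t * v - s / (2 * v)) ^ 2)) =
    ∫⁻ v in Ioi (0:ℝ), ENNReal.ofReal (s / (2 * v ^ 2) * exp (-(t * v - s / (2 * v)) ^ 2)) := by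
  have himg : (fun v : ℝ ↦ s / (2 * t * v)) '' Ioi 0 = Ioi 0 := by
    ext x
    simp only [mem_image, mem_Ioi]
    constructor
    · rintro ⟨v, hv, rfl⟩
      positivity
    · intro hx
      refine ⟨s / (2 * t * x), by positivity, ?_⟩
      field_simp
  conv_lhs => rw [← himg]
  rw [lintegral_image_eq_lintegral_abs_deriv_mul (f' := fun v ↦ -(s / (2 * t * v ^ 2)))
    measurableSet_Ioi]
  · refine setLIntegral_congr_fun measurableSet_Ioi fun v hv ↦ ?_
    have hv : (0:ℝ) < v := hv
    rw [abs_neg, abs_of_pos (by positivity), ← ENNReal.ofReal_mul (by positivity)]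
    congr 1
    rw [← mul_assoc]
    congr 1
    · field_simp
    · congr 2
      field_simp
      ring
  · intro v hv
    have hv : (0:ℝ) < v := hv
    have h := ((hasDerivAt_inv hv.ne').const_mul (s / (2 * t))).hasDerivWithinAt (s := Ioi 0)
    refine (h.congr_deriv ?_).congr (fun x hx ↦ ?_) ?_
    · field_simp
    · have hx : (0:ℝ) < x := hx
      field_simp
    · field_simp
  · intro x hx y hy hxy
    have hx : (0:ℝ) < x := hx
    have hy : (0:ℝ) < y := hy
    simp only at hxy
    field_simp at hxy
    linarith

open MeasureTheory Set in
theorem heis_subordination (s t : ℝ) (hs : 0 < s) (ht : 0 < t) :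
    ∫⁻ v in Ioi (0:ℝ), ENNReal.ofReal (t * exp (-(v ^ 2 * t ^ 2) - s ^ 2 / (4 * v ^ 2))) =
    ENNReal.ofReal (√π / 2 * exp (-(s * t))) := by
  have himg : (fun v : ℝ ↦ t * v - s / (2 * v)) '' Ioi 0 = univ := by
    ext x
    simp only [mem_image, mem_Ioi, mem_univ, iff_true]
    have h1 : |x| < √(x ^ 2 + 2 * s * t) := by
      rw [← Real.sqrt_sq_eq_abs]
      exact Real.sqrt_lt_sqrt (by positivity) (by nlinarith [mul_pos hs ht])
    have h2 : √(x ^ 2 + 2 * s * t) ^ 2 = x ^ 2 + 2 * s * t := Real.sq_sqrt (by positivity)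
    set r := √(x ^ 2 + 2 * s * t)
    have h3 : 0 < x + r := by linarith [neg_abs_le x]
    refine ⟨(x + r) / (2 * t), by positivity, ?_⟩
    field_simp
    linear_combination h2
  have hG : ∫⁻ x : ℝ, ENNReal.ofReal (exp (-x ^ 2)) = ENNReal.ofReal √π := by
    have := integral_gaussian 1
    rw [div_one] at this
    rw [← this, ofReal_integral_eq_lintegral_ofReal (integrable_exp_neg_mul_sq one_pos)]
    · simp
    · exact Filter.Eventually.of_forall fun x ↦ by positivity
  have key : ∫⁻ v in Ioi (0:ℝ), ENNReal.ofReal ((t + s / (2 * v ^ 2)) *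
      exp (-(t * v - s / (2 * v)) ^ 2)) = ENNReal.ofReal √π := by
    rw [← hG, ← setLIntegral_univ (fun x : ℝ ↦ ENNReal.ofReal (exp (-x ^ 2))), ← himg,
      lintegral_image_eq_lintegral_abs_deriv_mul (f' := fun v ↦ t + s / (2 * v ^ 2))
      measurableSet_Ioi]
    · refine setLIntegral_congr_fun measurableSet_Ioi fun v hv ↦ ?_
      have hv : (0:ℝ) < v := hv
      rw [abs_of_pos (by positivity), ← ENNReal.ofReal_mul (by positivity)]
    · intro v hv
      have hv : (0:ℝ) < v := hv
      have h := (((hasDerivAt_id v).const_mul t).sub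
        ((hasDerivAt_inv hv.ne').const_mul (s / 2))).hasDerivWithinAt (s := Ioi 0)
      refine (h.congr_deriv ?_).congr (fun x hx ↦ ?_) ?_
      · field_simp
        ring
      · have hx : (0:ℝ) < x := hx
        simp only [Pi.sub_apply, id]
        field_simp
      · simp only [Pi.sub_apply, id]
        field_simp
    · refine StrictMonoOn.injOn ?_
      intro x hx y hy hxy
      have hx : (0:ℝ) < x := hx
      have : s / (2 * y) < s / (2 * x) := by gcongr
      simp only
      nlinarith
  have h2 : 2 * ∫⁻ v in Ioi (0:ℝ), ENNReal.ofReal (t * exp (-(t * v - s / (2 * v)) ^ 2))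
      = ENNReal.ofReal √π := by
    rw [two_mul]
    conv_lhs => enter [2]; rw [heis_sub_sym s t hs ht]
    rw [← key, ← lintegral_add_left (by fun_prop)]
    refine setLIntegral_congr_fun measurableSet_Ioi fun v hv ↦ ?_
    have hv : (0:ℝ) < v := hv
    rw [← ENNReal.ofReal_add (by positivity) (by positivity), add_mul]
  have h3 : ∫⁻ v in Ioi (0:ℝ), ENNReal.ofReal (t * exp (-(v ^ 2 * t ^ 2) - s ^ 2 / (4 * v ^ 2))) =
      ENNReal.ofReal (exp (-(s * t))) *
      ∫⁻ v in Ioi (0:ℝ), ENNReal.ofReal (t * exp (-(t * v - s / (2 * v)) ^ 2)) := by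
    rw [← lintegral_const_mul _ (by fun_prop)]
    refine setLIntegral_congr_fun measurableSet_Ioi fun v hv ↦ ?_
    have hv : (0:ℝ) < v := hv
    rw [← ENNReal.ofReal_mul (by positivity), mul_left_comm, ← Real.exp_add]
    congr 3
    field_simp
    ring
  have h4 : ∫⁻ v in Ioi (0:ℝ), ENNReal.ofReal (t * exp (-(t * v - s / (2 * v)) ^ 2))
      = ENNReal.ofReal (√π / 2) := by
    rw [ENNReal.ofReal_div_of_pos two_pos, ← h2]
    rw [show ENNReal.ofReal 2 = 2 by simp, mul_comm, ENNReal.mul_div_cancel_right (by simp) (by simp)]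
  rw [h3, h4, ← ENNReal.ofReal_mul (by positivity), mul_comm]

open MeasureTheory Set in
theorem heis_inner (m v : ℝ) (hm : 0 ≤ m) (hv : 0 < v) :
    ∫⁻ t in Ioi (0:ℝ), ENNReal.ofReal (2 * √(t ^ 2 - m) * (t * exp (-(v ^ 2 * t ^ 2)))) =
    ENNReal.ofReal (√π / 2 / v ^ 3 * exp (-(v ^ 2 * m))) := by
  have himg : (fun y : ℝ ↦ √(y ^ 2 + m)) '' Ioi 0 = Ioi √m := by
    ext x
    simp only [mem_image, mem_Ioi]
    constructor
    · rintro ⟨y, hy, rfl⟩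
      exact Real.sqrt_lt_sqrt hm (by nlinarith)
    · intro hx
      have hx0 : 0 ≤ √m := Real.sqrt_nonneg m
      have h2 : m < x ^ 2 := by
        rw [← Real.sq_sqrt hm]
        exact pow_lt_pow_left₀ hx hx0 two_ne_zero
      refine ⟨√(x ^ 2 - m), Real.sqrt_pos.2 (by linarith), ?_⟩
      rw [Real.sq_sqrt (by linarith), sub_add_cancel, Real.sqrt_sq (by linarith)]
  have h1 : ∫⁻ t in Ioi (0:ℝ), ENNReal.ofReal (2 * √(t ^ 2 - m) * (t * exp (-(v ^ 2 * t ^ 2)))) =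
      ∫⁻ t in Ioi (√m), ENNReal.ofReal (2 * √(t ^ 2 - m) * (t * exp (-(v ^ 2 * t ^ 2)))) := by
    have hu : Ioi (0:ℝ) = Ioc 0 √m ∪ Ioi √m := (Ioc_union_Ioi_eq_Ioi (Real.sqrt_nonneg m)).symm
    rw [hu, lintegral_union measurableSet_Ioi (Ioc_disjoint_Ioi le_rfl)]
    rw [setLIntegral_congr_fun (g := fun _ ↦ 0) measurableSet_Ioc]
    · simp
    · intro t ht
      have : t ^ 2 ≤ m := by
        rw [← Real.sq_sqrt hm]
        exact pow_le_pow_left₀ ht.1.le ht.2 2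
      simp only
      rw [Real.sqrt_eq_zero_of_nonpos (by linarith)]
      simp
  rw [h1, ← himg, lintegral_image_eq_lintegral_abs_deriv_mul (f' := fun y ↦ y / √(y ^ 2 + m))
    measurableSet_Ioi]
  · have : ∀ y ∈ Ioi (0:ℝ), ENNReal.ofReal |y / √(y ^ 2 + m)| * ENNReal.ofReal
        (2 * √(√(y ^ 2 + m) ^ 2 - m) * (√(y ^ 2 + m) * exp (-(v ^ 2 * √(y ^ 2 + m) ^ 2)))) =
        ENNReal.ofReal (2 * exp (-(v ^ 2 * m))) * ENNReal.ofReal (y ^ 2 * exp (-(v ^ 2 * y ^ 2))) := by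
      intro y hy
      have hy : (0:ℝ) < y := hy
      have hp : 0 < √(y ^ 2 + m) := Real.sqrt_pos.2 (by positivity)
      rw [Real.sq_sqrt (by positivity), add_sub_cancel_right, Real.sqrt_sq hy.le,
        abs_of_pos (by positivity), ← ENNReal.ofReal_mul (by positivity),
        ← ENNReal.ofReal_mul (by positivity)]
      congr 1
      rw [mul_add, neg_add, Real.exp_add]
      field_simp
    rw [setLIntegral_congr_fun measurableSet_Ioi this, lintegral_const_mul _ (by fun_prop),
      heis_gauss_moment 2 (v ^ 2) (by positivity), ← ENNReal.ofReal_mul (by positivity)]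
    congr 1
    have hG : Real.Gamma (((2:ℕ) + 1 : ℝ) / 2) = √π / 2 := by
      have := Real.Gamma_nat_add_half 1
      norm_num at this ⊢
      exact this
    have hP : (v ^ 2) ^ (-(((2:ℕ):ℝ) + 1) / 2) = (v ^ 3)⁻¹ := by
      rw [← Real.rpow_natCast v 2, ← Real.rpow_mul hv.le, ← Real.rpow_natCast v 3, ← Real.rpow_neg hv.le]
      norm_num
    rw [hG, hP]
    field_simp
  · intro y hy
    have hy : (0:ℝ) < y := hy
    have hp : 0 < y ^ 2 + m := by positivity
    have h := ((((hasDerivAt_id y).pow 2).add_const m).sqrt hp.ne').hasDerivWithinAt (s := Ioi 0)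
    refine h.congr_deriv ?_
    simp
    field_simp
  · refine StrictMonoOn.injOn ?_
    intro x hx y hy hxy
    have hx : (0:ℝ) < x := hx
    exact Real.sqrt_lt_sqrt (by positivity) (by nlinarith)

open MeasureTheory Set in
theorem heis_last (c : ℝ) (hc : 0 < c) :
    ∫⁻ v in Ioi (0:ℝ), ENNReal.ofReal (1 / v ^ 5 * exp (-(c / v ^ 2))) =
    ENNReal.ofReal (1 / (2 * c ^ 2)) := by
  have himg : (fun v : ℝ ↦ v⁻¹) '' Ioi 0 = Ioi 0 := by
    ext x
    simp only [mem_image, mem_Ioi]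
    constructor
    · rintro ⟨v, hv, rfl⟩
      positivity
    · intro hx
      exact ⟨x⁻¹, by positivity, by simp⟩
  have h3 := heis_gauss_moment 3 c hc
  rw [← himg, lintegral_image_eq_lintegral_abs_deriv_mul (f' := fun v ↦ -(v ^ 2)⁻¹)
    measurableSet_Ioi] at h3
  · have hG : Real.Gamma (((3:ℕ) + 1 : ℝ) / 2) = 1 := by
      norm_num
    have hP : c ^ (-(((3:ℕ):ℝ) + 1) / 2) = (c ^ 2)⁻¹ := by
      rw [← Real.rpow_natCast c 2, ← Real.rpow_neg hc.le]
      norm_num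
    rw [hG, hP] at h3
    rw [show 1 / (2 * c ^ 2) = (c ^ 2)⁻¹ * (1 / 2) * 1 by field_simp, ← h3]
    refine setLIntegral_congr_fun measurableSet_Ioi fun v hv ↦ ?_
    have hv : (0:ℝ) < v := hv
    rw [abs_neg, abs_of_pos (by positivity), ← ENNReal.ofReal_mul (by positivity)]
    congr 1
    rw [← mul_assoc]
    congr 1
    · field_simp
    · congr 2
      field_simp
  · intro v hv
    have hv : (0:ℝ) < v := hv
    exact (hasDerivAt_inv hv.ne').hasDerivWithinAt
  · exact inv_injective.injOn

/-- The quadratic form `a² + b²` on `ℤ²`. -/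
noncomputable def heisQ (z : ℤ × ℤ) : ℝ := (z.1 : ℝ) ^ 2 + (z.2 : ℝ) ^ 2

theorem heisQ_nonneg (z : ℤ × ℤ) : 0 ≤ heisQ z := by unfold heisQ; positivity

theorem heisQ_zero : heisQ 0 = 0 := by simp [heisQ]

theorem heisQ_int (z : ℤ × ℤ) : heisQ z = ((z.1 ^ 2 + z.2 ^ 2).toNat : ℝ) := by
  have h : ((z.1 ^ 2 + z.2 ^ 2).toNat : ℤ) = z.1 ^ 2 + z.2 ^ 2 := Int.toNat_of_nonneg (by positivity)
  have : (((z.1 ^ 2 + z.2 ^ 2).toNat : ℤ) : ℝ) = ((z.1 ^ 2 + z.2 ^ 2 : ℤ) : ℝ) := by rw [h]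
  rw [Int.cast_natCast] at this
  rw [this, heisQ]
  push_cast
  rfl

theorem heisQ_one_le {z : ℤ × ℤ} (hz : z ≠ 0) : 1 ≤ heisQ z := by
  have : (1 : ℤ) ≤ z.1 ^ 2 + z.2 ^ 2 := by
    by_contra! h
    have h1 : z.1 = 0 := by
      by_contra h1
      have : 0 < z.1 ^ 2 := by positivity
      nlinarith [sq_nonneg z.2]
    have h2 : z.2 = 0 := by
      by_contra h1
      have : 0 < z.2 ^ 2 := by positivity
      nlinarith [sq_nonneg z.1]
    exact hz (Prod.ext h1 h2)
  unfold heisQ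
  exact_mod_cast this

theorem heis_finite (X : ℝ) : {z : ℤ × ℤ | heisQ z ≤ X}.Finite := by
  have hs : {z : ℤ × ℤ | heisQ z ≤ X} ⊆ Set.Icc (-⌈X⌉) ⌈X⌉ ×ˢ Set.Icc (-⌈X⌉) ⌈X⌉ := by
    intro z hz
    have hz : (z.1 : ℝ) ^ 2 + (z.2 : ℝ) ^ 2 ≤ X := hz
    have h1 : ∀ a : ℤ, (a : ℝ) ^ 2 ≤ X → a ∈ Set.Icc (-⌈X⌉) ⌈X⌉ := by
      intro a ha
      have h2 : ((a ^ 2 : ℤ) : ℝ) ≤ (⌈X⌉ : ℝ) := by push_cast; exact ha.trans (Int.le_ceil X)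
      have h3 : a ^ 2 ≤ ⌈X⌉ := by exact_mod_cast h2
      constructor <;> nlinarith [sq_nonneg (a-1), sq_nonneg (a+1), Int.le_self_sq a, Int.le_self_sq (-a)]
    exact ⟨h1 _ (by nlinarith [sq_nonneg (z.2:ℝ)]), h1 _ (by nlinarith [sq_nonneg (z.1:ℝ)])⟩
  exact ((Set.finite_Icc _ _).prod (Set.finite_Icc _ _)).subset hs

theorem heis_summable_gauss (a : ℝ) (ha : 0 < a) :
    Summable fun n : ℤ ↦ exp (-(a * (n : ℝ) ^ 2)) := by
  have h1 : Summable fun n : ℕ ↦ exp (-(a * (n : ℝ) ^ 2)) := by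
    have hg : Summable fun n : ℕ ↦ (exp (-a)) ^ n :=
      summable_geometric_of_lt_one (by positivity) (by simpa using ha)
    refine Summable.of_nonneg_of_le (fun n ↦ by positivity) (fun n ↦ ?_) hg
    rw [← Real.exp_nat_mul, Real.exp_le_exp]
    have : (n : ℝ) ≤ (n : ℝ) ^ 2 := by
      rcases n.eq_zero_or_pos with rfl | hn
      · simp
      · have : (1 : ℝ) ≤ n := by exact_mod_cast hn
        nlinarith
    nlinarith
  refine Summable.of_nat_of_neg ?_ ?_
  · simpa using h1
  · simpa using h1

theorem heis_theta1 (a : ℝ) (ha : 0 < a) :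
    ∑' n : ℤ, ENNReal.ofReal (exp (-(a * (n : ℝ) ^ 2))) =
      ENNReal.ofReal √(π / a) * ∑' n : ℤ, ENNReal.ofReal (exp (-(π ^ 2 / a * (n : ℝ) ^ 2))) := by
  have hpi := Real.pi_pos
  rw [← ENNReal.ofReal_tsum_of_nonneg (fun n ↦ by positivity) (heis_summable_gauss a ha),
    ← ENNReal.ofReal_tsum_of_nonneg (fun n ↦ by positivity)
      (heis_summable_gauss (π ^ 2 / a) (by positivity)), ← ENNReal.ofReal_mul (by positivity)]
  congr 1
  have h := Real.tsum_exp_neg_mul_int_sq (a := a / π) (by positivity)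
  have e1 : ∀ n : ℤ, -π * (a / π) * (n : ℝ) ^ 2 = -(a * (n : ℝ) ^ 2) := by
    intro n; field_simp
  have e2 : ∀ n : ℤ, -π / (a / π) * (n : ℝ) ^ 2 = -(π ^ 2 / a * (n : ℝ) ^ 2) := by
    intro n; field_simp
  simp only [e1, e2] at h
  rw [h, ← Real.sqrt_eq_rpow, one_div, ← Real.sqrt_inv, inv_div]

theorem heis_theta2 (a : ℝ) (ha : 0 < a) :
    ∑' z : ℤ × ℤ, ENNReal.ofReal (exp (-(a * heisQ z))) =
      ENNReal.ofReal (π / a) * ∑' z : ℤ × ℤ, ENNReal.ofReal (exp (-(π ^ 2 / a * heisQ z))) := by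
  have hpi := Real.pi_pos
  have key : ∀ b : ℝ, ∑' z : ℤ × ℤ, ENNReal.ofReal (exp (-(b * heisQ z))) =
      (∑' n : ℤ, ENNReal.ofReal (exp (-(b * (n : ℝ) ^ 2)))) *
      (∑' n : ℤ, ENNReal.ofReal (exp (-(b * (n : ℝ) ^ 2)))) := by
    intro b
    rw [ENNReal.tsum_prod', ← ENNReal.tsum_mul_right]
    refine tsum_congr fun m ↦ ?_
    rw [← ENNReal.tsum_mul_left]
    refine tsum_congr fun n ↦ ?_
    rw [← ENNReal.ofReal_mul (by positivity), ← Real.exp_add]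
    congr 2
    simp only [heisQ]
    ring
  rw [key, key, heis_theta1 a ha]
  have : ENNReal.ofReal (π / a) = ENNReal.ofReal √(π / a) * ENNReal.ofReal √(π / a) := by
    rw [← ENNReal.ofReal_mul (by positivity), Real.mul_self_sqrt (by positivity)]
  rw [this]
  ring

open MeasureTheory Set in
theorem heis_laplace_real (s : ℝ) (hs : 0 < s) :
    ∫⁻ t in Ioi (0:ℝ), ∑' z : ℤ × ℤ, ENNReal.ofReal (2 * √(t ^ 2 - heisQ z) * exp (-(s * t))) =
    ∑' z : ℤ × ℤ, ENNReal.ofReal (8 * π / (s ^ 2 + 4 * π ^ 2 * heisQ z) ^ 2) := by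
  have hpi := Real.pi_pos
  -- each term
  have h1 : ∀ z : ℤ × ℤ, ∫⁻ t in Ioi (0:ℝ),
      ENNReal.ofReal (2 * √(t ^ 2 - heisQ z) * exp (-(s * t))) =
      ∫⁻ v in Ioi (0:ℝ), ENNReal.ofReal (1 / v ^ 3 * exp (-(s ^ 2 / (4 * v ^ 2)))) *
        ENNReal.ofReal (exp (-(v ^ 2 * heisQ z))) := by
    intro z
    have e1 : ∀ t ∈ Ioi (0:ℝ), ENNReal.ofReal (2 * √(t ^ 2 - heisQ z) * exp (-(s * t))) =
        ∫⁻ v in Ioi (0:ℝ), ENNReal.ofReal (2 / √π * exp (-(s ^ 2 / (4 * v ^ 2)))) * ENNReal.ofReal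
          (2 * √(t ^ 2 - heisQ z) * (t * exp (-(v ^ 2 * t ^ 2)))) := by
      intro t ht
      have ht : (0:ℝ) < t := ht
      have hsub := heis_subordination s t hs ht
      have : ∀ v : ℝ, ENNReal.ofReal (2 / √π * exp (-(s ^ 2 / (4 * v ^ 2)))) * ENNReal.ofReal
          (2 * √(t ^ 2 - heisQ z) * (t * exp (-(v ^ 2 * t ^ 2)))) =
          ENNReal.ofReal (2 / √π * (2 * √(t ^ 2 - heisQ z))) *
          ENNReal.ofReal (t * exp (-(v ^ 2 * t ^ 2) - s ^ 2 / (4 * v ^ 2))) := by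
        intro v
        rw [← ENNReal.ofReal_mul (by positivity), ← ENNReal.ofReal_mul (by positivity),
          sub_eq_add_neg (-(v ^ 2 * t ^ 2)) _, Real.exp_add]
        congr 1
        ring
      simp only [this]
      rw [lintegral_const_mul _ (by fun_prop), hsub, ← ENNReal.ofReal_mul (by positivity)]
      congr 1
      field_simp
    rw [setLIntegral_congr_fun measurableSet_Ioi e1, lintegral_lintegral_swap]
    · refine setLIntegral_congr_fun measurableSet_Ioi fun v hv ↦ ?_
      have hv : (0:ℝ) < v := hv
      rw [lintegral_const_mul _ (by fun_prop), heis_inner _ v (heisQ_nonneg z) hv,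
        ← ENNReal.ofReal_mul (by positivity), ← ENNReal.ofReal_mul (by positivity)]
      congr 1
      field_simp
    · refine Measurable.aemeasurable ?_
      simp only [Function.uncurry_def]
      fun_prop
  rw [lintegral_tsum (fun z ↦ by fun_prop)]
  simp only [h1]
  rw [← lintegral_tsum (fun z ↦ by fun_prop)]
  have h2 : ∀ v ∈ Ioi (0:ℝ), ∑' z : ℤ × ℤ, ENNReal.ofReal (1 / v ^ 3 * exp (-(s ^ 2 / (4 * v ^ 2)))) *
        ENNReal.ofReal (exp (-(v ^ 2 * heisQ z))) =
      ∑' z : ℤ × ℤ, ENNReal.ofReal π * ENNReal.ofReal (1 / v ^ 5 *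
        exp (-((s ^ 2 / 4 + π ^ 2 * heisQ z) / v ^ 2))) := by
    intro v hv
    have hv : (0:ℝ) < v := hv
    rw [ENNReal.tsum_mul_left, heis_theta2 (v ^ 2) (by positivity), ← mul_assoc,
      ← ENNReal.tsum_mul_left]
    refine tsum_congr fun z ↦ ?_
    rw [← ENNReal.ofReal_mul (by positivity), ← ENNReal.ofReal_mul (by positivity),
      ← ENNReal.ofReal_mul (by positivity), add_div, neg_add, Real.exp_add]
    congr 1
    have x1 : s ^ 2 / (4 * v ^ 2) = s ^ 2 / 4 / v ^ 2 := by field_simp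
    have x2 : π ^ 2 / v ^ 2 * heisQ z = π ^ 2 * heisQ z / v ^ 2 := by field_simp
    rw [x1, x2]
    field_simp
  rw [setLIntegral_congr_fun measurableSet_Ioi h2, lintegral_tsum (fun z ↦ by fun_prop)]
  refine tsum_congr fun z ↦ ?_
  have hq := heisQ_nonneg z
  rw [lintegral_const_mul _ (by fun_prop), heis_last _ (by positivity),
    ← ENNReal.ofReal_mul (by positivity)]
  congr 1
  field_simp
  ring

theorem heis_summable_inv : Summable fun n : ℤ ↦ (1 + (n:ℝ) ^ 2)⁻¹ := by
  have h1 : Summable fun n : ℕ ↦ (1 + (n:ℝ) ^ 2)⁻¹ := by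
    have := (Real.summable_nat_pow_inv (p := 2)).2 (by norm_num)
    refine Summable.of_norm_bounded_eventually_nat this ?_
    filter_upwards [Filter.eventually_ge_atTop 1] with n hn
    have : (1:ℝ) ≤ n := by exact_mod_cast hn
    rw [Real.norm_of_nonneg (by positivity)]
    gcongr
    linarith
  refine Summable.of_nat_of_neg ?_ ?_
  · simpa using h1
  · simpa using h1

/-- `∑_{z ≠ 0} 1/q(z)²` converges (with the junk value `0` at `z = 0`). -/
theorem heis_summable_q2 : Summable fun z : ℤ × ℤ ↦ (heisQ z ^ 2)⁻¹ := by
  have h := (heis_summable_inv.mul_of_nonneg heis_summable_inv (fun n ↦ by positivity)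
    (fun n ↦ by positivity)).mul_left 4
  refine Summable.of_nonneg_of_le (fun z ↦ by positivity) (fun z ↦ ?_) h
  by_cases hz : z = 0
  · subst hz; rw [heisQ_zero]; simp
  · have h1 := heisQ_one_le hz
    have : 4 * ((1 + (z.1:ℝ) ^ 2)⁻¹ * (1 + (z.2:ℝ) ^ 2)⁻¹) =
      ((1 + (z.1:ℝ) ^ 2) * (1 + (z.2:ℝ) ^ 2) / 4)⁻¹ := by
      field_simp
    rw [this]
    gcongr
    unfold heisQ at *
    nlinarith [sq_nonneg (z.1:ℝ), sq_nonneg (z.2:ℝ), mul_nonneg (sq_nonneg (z.1:ℝ)) (sq_nonneg (z.2:ℝ)),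
      sq_nonneg ((z.1:ℝ)^2 - (z.2:ℝ)^2)]

theorem heis_denom_bound (s : ℂ) (R q : ℝ) (hs : 0 < s.re) (hR : ‖s‖ ≤ R) (hq : 0 ≤ q) :
    s.re / (2 * R) * (4 * π ^ 2 * q) ≤ ‖s ^ 2 + 4 * π ^ 2 * q‖ := by
  have hpi := Real.pi_pos
  have hsR : s.re ≤ R := (Complex.re_le_norm s).trans hR
  have hR0 : 0 < R := lt_of_lt_of_le hs hsR
  obtain ⟨c, hc0, hc⟩ : ∃ c : ℝ, 0 ≤ c ∧ 4 * π ^ 2 * q = c ^ 2 :=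
    ⟨2 * π * √q, by positivity, by rw [mul_pow, Real.sq_sqrt hq]; ring⟩
  have hc' : (4 * π ^ 2 * q : ℂ) = (c:ℂ) ^ 2 := by exact_mod_cast hc
  rw [hc, hc']
  by_cases hcR : 2 * R ^ 2 ≤ c ^ 2
  · have h1 : c ^ 2 - R ^ 2 ≤ ‖s ^ 2 + (c:ℂ) ^ 2‖ := by
      have := norm_sub_le (s ^ 2 + (c:ℂ)^2) (s ^ 2)
      rw [add_sub_cancel_left, norm_pow, norm_pow, Complex.norm_real, Real.norm_of_nonneg hc0] at this
      have : ‖s‖ ^ 2 ≤ R ^ 2 := by gcongr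
      linarith
    have h2 : s.re / (2 * R) ≤ 1 / 2 := by
      rw [div_le_div_iff₀ (by positivity) (by norm_num)]; linarith
    nlinarith [sq_nonneg c]
  · push Not at hcR
    have hf : s ^ 2 + (c:ℂ) ^ 2 = (s + c * Complex.I) * (s - c * Complex.I) := by
      ring_nf; rw [Complex.I_sq]; ring
    have h3 : s.re * c ≤ ‖s ^ 2 + (c:ℂ) ^ 2‖ := by
      rw [hf, norm_mul]
      have a1 : s.re ≤ ‖s + c * Complex.I‖ := by
        simpa using Complex.re_le_norm (s + c * Complex.I)
      have a2 : s.re ≤ ‖s - c * Complex.I‖ := by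
        simpa using Complex.re_le_norm (s - c * Complex.I)
      have b1 : |s.im + c| ≤ ‖s + c * Complex.I‖ := by
        simpa using Complex.abs_im_le_norm (s + c * Complex.I)
      have b2 : |s.im - c| ≤ ‖s - c * Complex.I‖ := by
        simpa using Complex.abs_im_le_norm (s - c * Complex.I)
      rcases le_total 0 s.im with h | h
      · have : c ≤ ‖s + c * Complex.I‖ := by
          refine le_trans ?_ b1; rw [abs_of_nonneg (by linarith)]; linarith
        rw [mul_comm]; gcongr
      · have : c ≤ ‖s - c * Complex.I‖ := by
          refine le_trans ?_ b2; rw [abs_of_nonpos (by linarith)]; linarith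
        gcongr
    refine le_trans ?_ h3
    have hc2 : c ≤ 2 * R := by nlinarith
    rw [div_mul_eq_mul_div, div_le_iff₀ (by positivity)]
    nlinarith [mul_nonneg hs.le hc0]

/-- The summand of the dual series. -/
noncomputable def heisG (s : ℂ) (z : ℤ × ℤ) : ℂ := 8 * π / (s ^ 2 + 4 * π ^ 2 * heisQ z) ^ 2

theorem heisG_bound (s : ℂ) (R : ℝ) (hs : 0 < s.re) (hR : ‖s‖ ≤ R) (z : ℤ × ℤ) (hz : z ≠ 0) :
    ‖heisG s z‖ ≤ 2 * R ^ 2 / (π ^ 3 * s.re ^ 2) * (heisQ z ^ 2)⁻¹ := by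
  have hpi := Real.pi_pos
  have hsR : s.re ≤ R := (Complex.re_le_norm s).trans hR
  have hR0 : 0 < R := lt_of_lt_of_le hs hsR
  have h1 := heisQ_one_le hz
  have hb := heis_denom_bound s R (heisQ z) hs hR (heisQ_nonneg z)
  unfold heisG
  rw [norm_div, norm_pow]
  have : ‖(8 * π : ℂ)‖ = 8 * π := by
    rw [norm_mul, Complex.norm_real, Real.norm_of_nonneg hpi.le]; simp
  rw [this]
  calc 8 * π / ‖s ^ 2 + 4 * π ^ 2 * (heisQ z : ℂ)‖ ^ 2 ≤
      8 * π / (s.re / (2 * R) * (4 * π ^ 2 * heisQ z)) ^ 2 := by gcongr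
    _ = _ := by field_simp; norm_num

theorem heisG_ne (s : ℂ) (hs : 0 < s.re) (z : ℤ × ℤ) : s ^ 2 + 4 * π ^ 2 * heisQ z ≠ 0 := by
  have hpi := Real.pi_pos
  by_cases hz : z = 0
  · subst hz; rw [heisQ_zero]
    have : s ≠ 0 := by rintro rfl; simp at hs
    simpa using this
  · have h1 := heisQ_one_le hz
    have hb := heis_denom_bound s ‖s‖ (heisQ z) hs le_rfl (heisQ_nonneg z)
    have : 0 < ‖s‖ := lt_of_lt_of_le hs (Complex.re_le_norm s)
    rw [← norm_pos_iff]
    refine lt_of_lt_of_le (by positivity) hb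

theorem heisG_summable (s : ℂ) (hs : 0 < s.re) : Summable (heisG s) := by
  have h := heis_summable_q2.mul_left (2 * ‖s‖ ^ 2 / (π ^ 3 * s.re ^ 2))
  refine Summable.of_norm_bounded_eventually h ?_
  have : (({0} : Set (ℤ × ℤ))ᶜ) ∈ Filter.cofinite (α := ℤ × ℤ) := by
    simp
  filter_upwards [this] with z hz
  exact heisG_bound s ‖s‖ hs le_rfl z hz

theorem heisG_diff : DifferentiableOn ℂ (fun s ↦ ∑' z, heisG s z) {s : ℂ | 0 < s.re} := by
  have hpi := Real.pi_pos
  intro s hs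
  have hs : 0 < s.re := hs
  set U : Set ℂ := {w | s.re / 2 < w.re} ∩ Metric.ball 0 (‖s‖ + 1) with hU
  have hUo : IsOpen U := (isOpen_lt continuous_const Complex.continuous_re).inter Metric.isOpen_ball
  have hsU : s ∈ U := ⟨by show s.re / 2 < s.re; linarith, by simp⟩
  have hd : DifferentiableOn ℂ (fun w ↦ ∑' z, heisG w z) U := by
    have hfin : ∀ w ∈ U, 0 < w.re := fun w hw ↦ by
      have : s.re / 2 < w.re := hw.1
      linarith
    have hsum := ((heis_summable_q2.mul_left (2 * (‖s‖ + 1) ^ 2 / (π ^ 3 * (s.re / 2) ^ 2))).add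
      (summable_of_hasFiniteSupport (f := fun z : ℤ × ℤ ↦ if z = 0 then 8 * π / (s.re / 2) ^ 4 else 0)
        ((Set.finite_singleton (0 : ℤ × ℤ)).subset (fun z hz ↦ by
          by_contra h
          simp_all))))
    refine Complex.differentiableOn_tsum_of_summable_norm hsum ?_ hUo ?_
    · intro z w hw
      have := heisG_ne w (hfin w hw) z
      unfold heisG
      refine DifferentiableAt.differentiableWithinAt ?_
      refine DifferentiableAt.div (by fun_prop) (by fun_prop) (pow_ne_zero 2 this)
    · intro z w hw
      have hw1 : s.re / 2 < w.re := hw.1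
      have hw2 : ‖w‖ ≤ ‖s‖ + 1 := by
        have := hw.2; simp at this; linarith
      by_cases hz : z = 0
      · subst hz
        simp only [heisG, heisQ_zero, if_true]
        rw [norm_div]
        have e : ‖(8 * π : ℂ)‖ = 8 * π := by
          rw [norm_mul, Complex.norm_real, Real.norm_of_nonneg hpi.le]; simp
        rw [e]
        have : ‖(w ^ 2 + 4 * π ^ 2 * ((0:ℝ):ℂ)) ^ 2‖ = ‖w‖ ^ 4 := by
          simp; ring
        rw [this]
        have : s.re / 2 ≤ ‖w‖ := hw1.le.trans (Complex.re_le_norm w)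
        have : 8 * π / ‖w‖ ^ 4 ≤ 8 * π / (s.re / 2) ^ 4 := by gcongr
        simpa using this
      · simp only [hz, if_false, add_zero]
        refine (heisG_bound w (‖s‖ + 1) (hfin w hw) hw2 z hz).trans ?_
        gcongr
  exact (hd.differentiableAt (hUo.mem_nhds hsU)).differentiableWithinAt

open Filter Topology in
theorem heisG_limit (l : ℝ) :
    Tendsto (fun σ : ℝ ↦ (σ:ℂ) ^ 2 * ∑' z, (if z = 0 then 0 else heisG (σ + 2 * π * l * Complex.I) z))
      (𝓝[>] 0) (𝓝 (∑' z : ℤ × ℤ, if z ≠ 0 ∧ heisQ z = l ^ 2 then ((-(1 / (2 * π * l ^ 2)) : ℝ) : ℂ) else 0)) := by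
  have hpi := Real.pi_pos
  simp only [← tsum_mul_left]
  have hsum := heis_summable_q2.mul_left (2 * (1 + 2 * π * |l|) ^ 2 / π ^ 3)
  refine tendsto_tsum_of_dominated_convergence hsum ?_ ?_
  · intro z
    by_cases hz : z = 0
    · simp [hz]
    simp only [hz, if_false, ne_eq, not_false_eq_true, true_and]
    by_cases hl : heisQ z = l ^ 2
    · have hl0 : l ≠ 0 := by
        rintro rfl
        have := heisQ_one_le hz
        rw [hl] at this; norm_num at this
      simp only [hl, if_true]
      have h1 : Tendsto (fun σ : ℝ ↦ (8 * π : ℂ) / ((σ:ℂ) + 4 * π * l * Complex.I) ^ 2) (𝓝[>] 0)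
          (𝓝 ((8 * π : ℂ) / (((0:ℝ):ℂ) + 4 * π * l * Complex.I) ^ 2)) := by
        refine Tendsto.mono_left ?_ nhdsWithin_le_nhds
        have hc : ContinuousAt (fun σ : ℝ ↦ (8 * π : ℂ) / ((σ:ℂ) + 4 * π * l * Complex.I) ^ 2) 0 := by
          refine ContinuousAt.div (by fun_prop) (by fun_prop) ?_
          simp [hpi.ne', hl0]
        exact hc
      have h2 : (8 * π : ℂ) / (((0:ℝ):ℂ) + 4 * π * l * Complex.I) ^ 2 = ((-(1 / (2 * π * l ^ 2)) : ℝ) : ℂ) := by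
        have : (l:ℂ) ≠ 0 := by exact_mod_cast hl0
        have : (π:ℂ) ≠ 0 := by exact_mod_cast hpi.ne'
        push_cast
        rw [zero_add, mul_pow, Complex.I_sq]
        field_simp
        norm_num
      rw [h2] at h1
      refine h1.congr' ?_
      filter_upwards [self_mem_nhdsWithin] with σ hσ
      have hσ : 0 < σ := hσ
      have hne : (σ:ℂ) ≠ 0 := by exact_mod_cast hσ.ne'
      have e : ((σ:ℂ) + 2 * π * l * Complex.I) ^ 2 + 4 * π ^ 2 * ((l ^ 2 : ℝ) : ℂ) =
          σ * (σ + 4 * π * l * Complex.I) := by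
        push_cast
        ring_nf; rw [Complex.I_sq]; ring
      rw [heisG, hl, e, mul_pow]
      rw [mul_div_assoc', mul_div_mul_left _ _ (pow_ne_zero 2 hne)]
    · simp only [hl, if_false]
      have hc : ContinuousAt (fun σ : ℝ ↦ (σ:ℂ) ^ 2 * heisG (σ + 2 * π * l * Complex.I) z) 0 := by
        unfold heisG
        refine ContinuousAt.mul (by fun_prop) (ContinuousAt.div (by fun_prop) (by fun_prop) ?_)
        refine pow_ne_zero 2 ?_
        have e : (((0:ℝ):ℂ) + 2 * π * l * Complex.I) ^ 2 + 4 * π ^ 2 * (heisQ z : ℂ) =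
          ((4 * π ^ 2 * (heisQ z - l ^ 2) : ℝ) : ℂ) := by
          push_cast
          ring_nf; rw [Complex.I_sq]; ring
        rw [e]
        have : heisQ z - l ^ 2 ≠ 0 := sub_ne_zero.2 hl
        exact_mod_cast (by positivity)
      have := hc.tendsto
      simp only [Complex.ofReal_zero, ne_eq, OfNat.ofNat_ne_zero, not_false_eq_true, zero_pow, zero_mul] at this
      exact this.mono_left nhdsWithin_le_nhds
  · filter_upwards [Ioo_mem_nhdsGT (zero_lt_one (α := ℝ))] with σ hσ z
    have hσ0 : 0 < σ := hσ.1
    by_cases hz : z = 0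
    · simp [hz, heisQ_zero]
    simp only [hz, if_false]
    have hre : ((σ:ℂ) + 2 * π * l * Complex.I).re = σ := by simp
    have hn : ‖(σ:ℂ) + 2 * π * l * Complex.I‖ ≤ 1 + 2 * π * |l| := by
      refine (norm_add_le _ _).trans ?_
      have : ‖(2 * π * l * Complex.I : ℂ)‖ = 2 * π * |l| := by
        simp [abs_of_pos hpi]
      rw [this, Complex.norm_real, Real.norm_of_nonneg hσ0.le]
      linarith [hσ.2]
    have := heisG_bound _ _ (by rw [hre]; exact hσ0) hn z hz
    rw [hre] at this
    rw [norm_mul, norm_pow, Complex.norm_real, Real.norm_of_nonneg hσ0.le]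
    calc σ ^ 2 * ‖heisG (σ + 2 * π * l * Complex.I) z‖ ≤ σ ^ 2 * (2 * (1 + 2 * π * |l|) ^ 2 / (π ^ 3 * σ ^ 2) * (heisQ z ^ 2)⁻¹) := by gcongr
      _ = _ := by field_simp

/-- `A(t) = ∑_z 2 √(t² - q(z))`, a finite sum. -/
noncomputable def heisA (t : ℝ) : ℝ := ∑' z : ℤ × ℤ, 2 * √(t ^ 2 - heisQ z)

theorem heisA_summable (t c : ℝ) : Summable fun z : ℤ × ℤ ↦ 2 * √(t ^ 2 - heisQ z) * c := by
  refine summable_of_hasFiniteSupport ((heis_finite (t ^ 2)).subset fun z hz ↦ ?_)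
  by_contra h
  have h : ¬ heisQ z ≤ t ^ 2 := h
  apply hz
  push Not at h
  simp only [Real.sqrt_eq_zero_of_nonpos (by linarith : t ^ 2 - heisQ z ≤ 0)]
  ring

theorem heisA_nonneg (t : ℝ) : 0 ≤ heisA t := tsum_nonneg fun z ↦ by positivity

theorem heisA_ofReal (t c : ℝ) (hc : 0 ≤ c) : ENNReal.ofReal (heisA t * c) =
    ∑' z : ℤ × ℤ, ENNReal.ofReal (2 * √(t ^ 2 - heisQ z) * c) := by
  rw [heisA, ← tsum_mul_right, ENNReal.ofReal_tsum_of_nonneg (fun z ↦ by positivity)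
    (heisA_summable t c)]

theorem heisA_measurable : Measurable heisA := by
  have : heisA = fun t ↦ (∑' z : ℤ × ℤ, ENNReal.ofReal (2 * √(t ^ 2 - heisQ z) * 1)).toReal := by
    funext t
    rw [← heisA_ofReal t 1 zero_le_one, mul_one, ENNReal.toReal_ofReal (heisA_nonneg t)]
  rw [this]
  exact (Measurable.tsum fun z ↦ by fun_prop).ennreal_toReal

theorem heisG_real (s : ℝ) (z : ℤ × ℤ) :
    heisG s z = ((8 * π / (s ^ 2 + 4 * π ^ 2 * heisQ z) ^ 2 : ℝ) : ℂ) := by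
  unfold heisG; push_cast; rfl

open MeasureTheory Set in
theorem heisA_lintegral (s : ℝ) (hs : 0 < s) :
    ∫⁻ t in Ioi (0:ℝ), ENNReal.ofReal (heisA t * exp (-(s * t))) =
      ENNReal.ofReal (∑' z : ℤ × ℤ, 8 * π / (s ^ 2 + 4 * π ^ 2 * heisQ z) ^ 2) := by
  have hpi := Real.pi_pos
  have : ∀ t, ENNReal.ofReal (heisA t * exp (-(s * t))) = _ :=
    fun t ↦ heisA_ofReal t _ (exp_pos _).le
  simp only [this]
  rw [heis_laplace_real s hs, ENNReal.ofReal_tsum_of_nonneg]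
  · intro z
    have := heisQ_nonneg z
    positivity
  · have := heisG_summable (s:ℂ) (by simpa using hs)
    have h2 : heisG (s:ℂ) = fun z ↦ ((8 * π / (s ^ 2 + 4 * π ^ 2 * heisQ z) ^ 2 : ℝ) : ℂ) := by
      funext z; exact heisG_real s z
    rw [h2] at this
    exact Complex.summable_ofReal.1 this

open MeasureTheory Set in
theorem heisA_integrable (s : ℝ) (hs : 0 < s) :
    IntegrableOn (fun t ↦ heisA t * exp (-(s * t))) (Ioi (0:ℝ)) := by
  refine ⟨(heisA_measurable.mul (by fun_prop)).aestronglyMeasurable, ?_⟩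
  rw [hasFiniteIntegral_iff_ofReal, heisA_lintegral s hs]
  · exact ENNReal.ofReal_lt_top
  · exact Filter.Eventually.of_forall fun t ↦ mul_nonneg (heisA_nonneg t) (exp_pos _).le

open MeasureTheory Set in
theorem heisA_integral (s : ℝ) (hs : 0 < s) :
    ∫ t in Ioi (0:ℝ), heisA t * exp (-(s * t)) =
      ∑' z : ℤ × ℤ, 8 * π / (s ^ 2 + 4 * π ^ 2 * heisQ z) ^ 2 := by
  have hpi := Real.pi_pos
  rw [integral_eq_lintegral_of_nonneg_ae
    (Filter.Eventually.of_forall fun t ↦ mul_nonneg (heisA_nonneg t) (exp_pos _).le)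
    (heisA_measurable.mul (by fun_prop)).aestronglyMeasurable, heisA_lintegral s hs,
    ENNReal.toReal_ofReal]
  refine tsum_nonneg fun z ↦ ?_
  have := heisQ_nonneg z
  positivity

open MeasureTheory Set ProbabilityTheory in
theorem heisA_laplace (s : ℂ) (hs : 0 < s.re) :
    ∫ t in Ioi (0:ℝ), (heisA t : ℂ) * Complex.exp (-(s * t)) = ∑' z, heisG s z := by
  have hpi := Real.pi_pos
  set ν : Measure ℝ := (volume.restrict (Ioi 0)).withDensity (fun t ↦ ENNReal.ofReal (heisA t)) with hν
  have hm : Measurable fun t ↦ ENNReal.ofReal (heisA t) := heisA_measurable.ennreal_ofReal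
  have hlt : ∀ᵐ t ∂(volume.restrict (Ioi (0:ℝ))), ENNReal.ofReal (heisA t) < ⊤ :=
    Filter.Eventually.of_forall fun t ↦ ENNReal.ofReal_lt_top
  have hset : Ioi (0:ℝ) ⊆ integrableExpSet (fun t ↦ -t) ν := by
    intro x hx
    have hx : 0 < x := hx
    show Integrable _ _
    rw [hν, integrable_withDensity_iff hm hlt]
    refine (heisA_integrable x hx).congr (Filter.Eventually.of_forall fun t ↦ ?_)
    simp only
    rw [ENNReal.toReal_ofReal (heisA_nonneg t), mul_comm, mul_neg]
  have hIntg : Ioi (0:ℝ) ⊆ interior (integrableExpSet (fun t ↦ -t) ν) :=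
    interior_maximal hset isOpen_Ioi
  have hF : ∀ w, complexMGF (fun t ↦ -t) ν w = ∫ t in Ioi (0:ℝ), (heisA t : ℂ) * Complex.exp (-(w * t)) := by
    intro w
    unfold complexMGF
    rw [hν, integral_withDensity_eq_integral_toReal_smul hm hlt]
    refine integral_congr_ae (Filter.Eventually.of_forall fun t ↦ ?_)
    simp only
    rw [ENNReal.toReal_ofReal (heisA_nonneg t), Complex.real_smul]
    push_cast
    rw [mul_neg]
  have hU : IsOpen {w : ℂ | 0 < w.re} := isOpen_lt continuous_const Complex.continuous_re
  have han1 : AnalyticOnNhd ℂ (complexMGF (fun t ↦ -t) ν) {w : ℂ | 0 < w.re} :=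
    analyticOnNhd_complexMGF.mono fun w hw ↦ hIntg hw
  have han2 : AnalyticOnNhd ℂ (fun s ↦ ∑' z, heisG s z) {w : ℂ | 0 < w.re} :=
    heisG_diff.analyticOnNhd hU
  have hconv : IsPreconnected {w : ℂ | 0 < w.re} := by
    exact (convex_halfSpace_re_gt 0).isPreconnected
  have hreal : ∀ x : ℝ, 0 < x → complexMGF (fun t ↦ -t) ν x = ∑' z, heisG x z := by
    intro x hx
    rw [hF]
    simp only [heisG_real]
    rw [← Complex.ofReal_tsum, ← heisA_integral x hx, ← integral_complex_ofReal]
    refine integral_congr_ae (Filter.Eventually.of_forall fun t ↦ ?_)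
    simp only
    push_cast
    rfl
  have hfreq : ∃ᶠ w in nhdsWithin (1:ℂ) {1}ᶜ, complexMGF (fun t ↦ -t) ν w = ∑' z, heisG w z := by
    have ht : Filter.Tendsto (fun x : ℝ ↦ (x:ℂ)) (nhdsWithin 1 {1}ᶜ) (nhdsWithin (1:ℂ) {1}ᶜ) := by
      refine tendsto_nhdsWithin_iff.2 ⟨?_, ?_⟩
      · have : ContinuousAt (fun x : ℝ ↦ (x:ℂ)) 1 := by fun_prop
        have h := this.tendsto
        rw [Complex.ofReal_one] at h
        exact h.mono_left nhdsWithin_le_nhds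
      · filter_upwards [self_mem_nhdsWithin] with x hx
        have hx : x ≠ 1 := hx
        show (x:ℂ) ≠ 1
        exact_mod_cast hx
    refine ht.frequently (Filter.Eventually.frequently ?_)
    have : Ioi (0:ℝ) ∈ nhdsWithin (1:ℝ) {1}ᶜ := mem_nhdsWithin_of_mem_nhds (Ioi_mem_nhds one_pos)
    filter_upwards [this] with x hx
    exact hreal x hx
  have := han1.eqOn_of_preconnected_of_frequently_eq han2 hconv (by simp : (1:ℂ) ∈ {w : ℂ | 0 < w.re}) hfreq
  rw [← hF]
  exact this hs

open MeasureTheory Set in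
theorem heis_cube_integrable (n : ℕ) (s : ℝ) (hs : 0 < s) :
    IntegrableOn (fun t : ℝ ↦ t ^ n * exp (-(s * t))) (Ioi (0:ℝ)) := by
  have := integrableOn_rpow_mul_exp_neg_mul_rpow (p := 1) (s := n) (b := s)
    (by have : (0:ℝ) ≤ n := by positivity
        linarith) zero_lt_one hs
  refine this.congr_fun (fun t ht ↦ ?_) measurableSet_Ioi
  simp

theorem heis_norm_exp (s : ℂ) (t : ℝ) : ‖Complex.exp (-(s * t))‖ = exp (-(s.re * t)) := by
  rw [Complex.norm_exp]; simp

open MeasureTheory Set in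
theorem heis_integrable_mul_exp (f : ℝ → ℝ) (s : ℂ)
    (hf : IntegrableOn (fun t ↦ f t * exp (-(s.re * t))) (Ioi (0:ℝ))) (hm : Measurable f) :
    IntegrableOn (fun t ↦ (f t : ℂ) * Complex.exp (-(s * t))) (Ioi (0:ℝ)) := by
  refine Integrable.mono hf ?_ (Filter.Eventually.of_forall fun t ↦ ?_)
  · have : Measurable fun t ↦ (f t : ℂ) * Complex.exp (-(s * t)) :=
      (Complex.measurable_ofReal.comp hm).mul (by fun_prop)
    exact this.aestronglyMeasurable
  · rw [norm_mul, heis_norm_exp, Complex.norm_real, norm_mul, Real.norm_of_nonneg (exp_pos _).le]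

/-- Laplace transform of `tⁿ`. -/
theorem heis_pow_laplace (n : ℕ) (s : ℂ) (hs : 0 < s.re) :
    ∫ t in Set.Ioi (0:ℝ), ((t ^ n : ℝ) : ℂ) * Complex.exp (-(s * t)) = (n.factorial : ℂ) / s ^ (n + 1) := by
  have hs0 : s ≠ 0 := by rintro rfl; simp at hs
  induction n with
  | zero =>
    have := integral_exp_mul_complex_Ioi (a := -s) (by simpa using hs) 0
    simpa using this
  | succ n ih =>
    have hi : ∀ k : ℕ, MeasureTheory.IntegrableOn
        (fun t : ℝ ↦ ((t ^ k : ℝ) : ℂ) * Complex.exp (-(s * t))) (Set.Ioi (0:ℝ)) := fun k ↦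
      heis_integrable_mul_exp _ s (heis_cube_integrable k _ hs) (by fun_prop)
    have hd : ∀ t : ℝ, HasDerivAt (fun t : ℝ ↦ ((t ^ (n + 1) : ℝ) : ℂ) * Complex.exp (-(s * t)))
        ((n + 1) * (((t ^ n : ℝ) : ℂ) * Complex.exp (-(s * t))) -
          s * (((t ^ (n + 1) : ℝ) : ℂ) * Complex.exp (-(s * t)))) t := by
      intro t
      have h1 : HasDerivAt (fun t : ℝ ↦ ((t ^ (n + 1) : ℝ) : ℂ)) ((((n + 1 : ℕ) : ℝ) * t ^ n : ℝ) : ℂ) t := by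
        have := (hasDerivAt_pow (n + 1) t).ofReal_comp
        simpa using this
      have h2 : HasDerivAt (fun t : ℝ ↦ Complex.exp (-(s * t))) (Complex.exp (-(s * t)) * (-(s * 1))) t := by
        refine HasDerivAt.cexp ?_
        exact ((Complex.ofRealCLM.hasDerivAt (x := t)).const_mul s).neg
      refine (h1.mul h2).congr_deriv ?_
      push_cast
      ring
    have hlim : Filter.Tendsto (fun t : ℝ ↦ ((t ^ (n + 1) : ℝ) : ℂ) * Complex.exp (-(s * t)))
        Filter.atTop (nhds 0) := by
      rw [tendsto_zero_iff_norm_tendsto_zero]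
      have := tendsto_rpow_mul_exp_neg_mul_atTop_nhds_zero ((n + 1 : ℕ) : ℝ) s.re hs
      refine this.congr' ?_
      filter_upwards [Filter.eventually_ge_atTop 0] with t ht
      rw [norm_mul, heis_norm_exp, Complex.norm_real, Real.norm_of_nonneg (by positivity),
        Real.rpow_natCast, neg_mul]
    have hIntg := (((hi n).const_mul ((n:ℂ) + 1)).sub ((hi (n + 1)).const_mul s))
    have h := MeasureTheory.integral_Ioi_of_hasDerivAt_of_tendsto' (a := 0) (fun t _ ↦ hd t) hIntg hlim
    rw [MeasureTheory.integral_sub ((hi n).const_mul _) ((hi (n+1)).const_mul _),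
      MeasureTheory.integral_const_mul, MeasureTheory.integral_const_mul, ih] at h
    simp only [ne_eq, Nat.add_eq_zero_iff, one_ne_zero, and_false, not_false_eq_true, zero_pow,
      Complex.ofReal_zero, zero_mul, sub_zero] at h
    have h3 : s * ∫ t in Set.Ioi (0:ℝ), ((t ^ (n + 1) : ℝ) : ℂ) * Complex.exp (-(s * t)) =
      (n + 1) * (n.factorial / s ^ (n + 1)) := by linear_combination -h
    have h4 := congrArg (fun w ↦ w / s) h3
    simp only [mul_div_cancel_left₀ _ hs0] at h4
    rw [h4, Nat.factorial_succ]
    push_cast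
    field_simp
    ring

/-- `D(t) = A(t) - (4π/3) t³`. -/
noncomputable def heisD (t : ℝ) : ℝ := heisA t - 4 * π / 3 * t ^ 3

theorem heisD_measurable : Measurable heisD := heisA_measurable.sub (by fun_prop)

open MeasureTheory Set in
theorem heisD_integrable (s : ℝ) (hs : 0 < s) :
    IntegrableOn (fun t ↦ heisD t * exp (-(s * t))) (Ioi (0:ℝ)) := by
  refine ((heisA_integrable s hs).sub ((heis_cube_integrable 3 s hs).const_mul (4 * π / 3))).congr
    (Filter.Eventually.of_forall fun t ↦ ?_)
  simp only [heisD, Pi.sub_apply]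
  ring

open MeasureTheory Set in
theorem heisD_laplace (s : ℂ) (hs : 0 < s.re) :
    ∫ t in Ioi (0:ℝ), (heisD t : ℂ) * Complex.exp (-(s * t)) =
      ∑' z, if z = 0 then 0 else heisG s z := by
  have h1 := heisA_laplace s hs
  have h2 := heis_pow_laplace 3 s hs
  rw [(heisG_summable s hs).tsum_eq_add_tsum_ite 0] at h1
  have e : ∀ t : ℝ, (heisD t : ℂ) * Complex.exp (-(s * t)) = (heisA t : ℂ) * Complex.exp (-(s * t)) -
      (4 * π / 3 : ℂ) * (((t ^ 3 : ℝ) : ℂ) * Complex.exp (-(s * t))) := by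
    intro t; simp only [heisD]; push_cast; ring
  simp only [e]
  rw [integral_sub (heis_integrable_mul_exp _ s (heisA_integrable _ hs) heisA_measurable)
    ((heis_integrable_mul_exp _ s (heis_cube_integrable 3 _ hs) (by fun_prop)).const_mul _),
    integral_const_mul, h1, h2]
  have : heisG s 0 = 8 * π / s ^ 4 := by
    simp only [heisG, heisQ_zero]; congr 1; push_cast; ring
  rw [this]
  have : (Nat.factorial 3 : ℂ) = 6 := by norm_num [Nat.factorial]
  rw [this]
  ring

open Filter Topology MeasureTheory in
theorem heisD_limit (l : ℝ) :
    Tendsto (fun σ : ℝ ↦ (σ:ℂ) ^ 2 * ∫ t in Set.Ioi (0:ℝ),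
        (heisD t : ℂ) * Complex.exp (-((σ + 2 * π * l * Complex.I) * t)))
      (𝓝[>] 0) (𝓝 (∑' z : ℤ × ℤ, if z ≠ 0 ∧ heisQ z = l ^ 2 then ((-(1 / (2 * π * l ^ 2)) : ℝ) : ℂ) else 0)) := by
  refine (heisG_limit l).congr' ?_
  filter_upwards [self_mem_nhdsWithin] with σ hσ
  have hσ : 0 < σ := hσ
  rw [heisD_laplace _ (by simpa using hσ)]

theorem heis_Icc_succ (f : ℤ → ℝ) (n : ℕ) :
    ∑ b ∈ Finset.Icc (-((n + 1 : ℕ) : ℤ)) ((n + 1 : ℕ) : ℤ), f b =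
      ∑ b ∈ Finset.Icc (-(n : ℤ)) n, f b + f ((n + 1 : ℕ) : ℤ) + f (-((n + 1 : ℕ) : ℤ)) := by
  have h : Finset.Icc (-((n + 1 : ℕ) : ℤ)) ((n + 1 : ℕ) : ℤ) =
      insert ((n + 1 : ℕ) : ℤ) (insert (-((n + 1 : ℕ) : ℤ)) (Finset.Icc (-(n : ℤ)) n)) := by
    ext x
    simp only [Finset.mem_Icc, Finset.mem_insert]
    omega
  rw [h, Finset.sum_insert, Finset.sum_insert]
  · ring
  · simp
  · simp only [Finset.mem_Icc, Finset.mem_insert]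
    omega

theorem heis_T_closed (v : ℝ) (n : ℕ) :
    ∑ b ∈ Finset.Icc (-(n : ℤ)) n, (v - (b : ℝ) ^ 2) = (2 * n + 1) * v - n * (n + 1) * (2 * n + 1) / 3 := by
  induction n with
  | zero => simp
  | succ n ih => rw [heis_Icc_succ, ih]; push_cast; ring

theorem heis_T_bound (v : ℝ) (M : ℕ) (hM : √v ≤ M) :
    |∑ b ∈ Finset.Icc (-(M : ℤ)) M, max (v - (b : ℝ) ^ 2) 0 - 4 / 3 * (v * √v)| ≤ √v := by
  rcases lt_or_ge v 0 with hv | hv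
  · rw [Real.sqrt_eq_zero_of_nonpos hv.le, Finset.sum_eq_zero]
    · simp
    · intro b _
      exact max_eq_right (by nlinarith [sq_nonneg (b:ℝ)])
  set r := √v with hr
  have hr0 : 0 ≤ r := Real.sqrt_nonneg v
  have hrv : v = r ^ 2 := (Real.sq_sqrt hv).symm
  set B := ⌊r⌋₊ with hB
  have hB1 : (B:ℝ) ≤ r := Nat.floor_le hr0
  have hB2 : r < B + 1 := Nat.lt_floor_add_one r
  have hBM : B ≤ M := by
    have : (B:ℝ) ≤ M := hB1.trans hM
    exact_mod_cast this
  have hsum : ∑ b ∈ Finset.Icc (-(M : ℤ)) M, max (v - (b : ℝ) ^ 2) 0 =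
      ∑ b ∈ Finset.Icc (-(B : ℤ)) B, (v - (b : ℝ) ^ 2) := by
    rw [← Finset.sum_subset (s₁ := Finset.Icc (-(B : ℤ)) B)]
    · refine Finset.sum_congr rfl fun b hb ↦ max_eq_left ?_
      rw [Finset.mem_Icc] at hb
      have h1 : (-(B:ℝ)) ≤ b := by exact_mod_cast hb.1
      have h2 : (b:ℝ) ≤ B := by exact_mod_cast hb.2
      nlinarith
    · intro b hb
      rw [Finset.mem_Icc] at *
      omega
    · intro b _ hb
      refine max_eq_right ?_
      rw [Finset.mem_Icc, not_and_or] at hb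
      have : (B:ℝ) + 1 ≤ |(b:ℝ)| := by
        rw [← Int.cast_abs]
        have : (B:ℤ) + 1 ≤ |b| := by
          rcases hb with hb | hb
          · rw [le_abs]; right; omega
          · rw [le_abs]; left; omega
        exact_mod_cast this
      rw [← sq_abs (b:ℝ)]
      nlinarith [abs_nonneg (b:ℝ)]
  rw [hsum, heis_T_closed, hrv]
  obtain ⟨θ, hθ⟩ : ∃ θ, θ = r - B := ⟨_, rfl⟩
  have hBθ : (B:ℝ) = r - θ := by rw [hθ]; ring
  have hθ0 : 0 ≤ θ := by rw [hθ]; linarith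
  have hθ1 : θ ≤ 1 := by rw [hθ]; linarith
  have hθr : θ ≤ r := by rw [hθ]; linarith [(Nat.cast_nonneg B : (0:ℝ) ≤ B)]
  rw [hBθ]
  have e : (2 * (r - θ) + 1) * r ^ 2 - (r - θ) * (r - θ + 1) * (2 * (r - θ) + 1) / 3 - 4 / 3 * (r ^ 2 * r) =
    -(6 * θ ^ 2 - 6 * θ + 1) / 3 * r + θ * (1 - θ) * (1 - 2 * θ) / 3 := by ring
  rw [e]
  have k1 : |-(6 * θ ^ 2 - 6 * θ + 1) / 3| ≤ 1 / 3 := by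
    rw [abs_le]; constructor <;> nlinarith [sq_nonneg (θ - 1/2)]
  have k2 : |θ * (1 - θ) * (1 - 2 * θ) / 3| ≤ r / 3 := by
    have a1 : |(1 - θ) * (1 - 2 * θ)| ≤ 1 := by
      rw [abs_mul]
      have : |1 - θ| ≤ 1 := by rw [abs_le]; constructor <;> linarith
      have : |1 - 2 * θ| ≤ 1 := by rw [abs_le]; constructor <;> linarith
      nlinarith [abs_nonneg (1 - θ), abs_nonneg (1 - 2 * θ)]
    rw [abs_div, mul_assoc, abs_mul, abs_of_nonneg hθ0, abs_of_pos (by norm_num : (0:ℝ) < 3)]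
    have : θ * |(1 - θ) * (1 - 2 * θ)| ≤ r * 1 := by gcongr
    linarith
  calc _ ≤ |-(6 * θ ^ 2 - 6 * θ + 1) / 3 * r| + |θ * (1 - θ) * (1 - 2 * θ) / 3| := abs_add_le _ _
    _ ≤ 1 / 3 * r + r / 3 := by
      rw [abs_mul, abs_of_nonneg hr0]; gcongr
    _ ≤ r := by linarith

theorem heis_int1 (w r : ℝ) (hr : 0 ≤ r) (hw : w ≤ r ^ 2) :
    ∫ y in (-r)..r, max (w - y ^ 2) 0 = 4 / 3 * (w * √w) := by
  have hc : Continuous fun y : ℝ ↦ max (w - y ^ 2) 0 := by fun_prop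
  rcases lt_or_ge w 0 with h0 | h0
  · rw [Real.sqrt_eq_zero_of_nonpos h0.le]
    have : (fun y : ℝ ↦ max (w - y ^ 2) 0) = fun _ ↦ 0 := by
      funext y; exact max_eq_right (by nlinarith [sq_nonneg y])
    rw [this]; simp
  set s := √w with hs
  have hs0 : 0 ≤ s := Real.sqrt_nonneg w
  have hws : w = s ^ 2 := (Real.sq_sqrt h0).symm
  have hsr : s ≤ r := by nlinarith [abs_le_of_sq_le_sq' (hws ▸ hw) hr]
  rw [← intervalIntegral.integral_add_adjacent_intervals (b := -s) (hc.intervalIntegrable _ _)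
    (hc.intervalIntegrable _ _), ← intervalIntegral.integral_add_adjacent_intervals (a := -s) (b := s) (hc.intervalIntegrable _ _)
    (hc.intervalIntegrable _ _)]
  have i1 : ∫ y in (-r)..(-s), max (w - y ^ 2) 0 = 0 := by
    rw [intervalIntegral.integral_congr (g := fun _ ↦ 0)]
    · simp
    · intro y hy
      rw [Set.uIcc_of_le (by linarith)] at hy
      exact max_eq_right (by nlinarith [hy.1, hy.2])
  have i3 : ∫ y in s..r, max (w - y ^ 2) 0 = 0 := by
    rw [intervalIntegral.integral_congr (g := fun _ ↦ 0)]
    · simp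
    · intro y hy
      rw [Set.uIcc_of_le (by linarith)] at hy
      exact max_eq_right (by nlinarith [hy.1, hy.2])
  have i2 : ∫ y in (-s)..s, max (w - y ^ 2) 0 = ∫ y in (-s)..s, (w - y ^ 2) := by
    refine intervalIntegral.integral_congr fun y hy ↦ ?_
    rw [Set.uIcc_of_le (by linarith)] at hy
    exact max_eq_left (by nlinarith [hy.1, hy.2])
  rw [i1, i3, i2, intervalIntegral.integral_sub (by simp) (by
    exact (continuous_pow 2).intervalIntegrable _ _), intervalIntegral.integral_const, integral_pow]
  rw [hws]
  simp
  ring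

theorem heis_int2 (r : ℝ) (hr : 0 < r) :
    ∫ y in (-r)..r, 4 / 3 * ((r ^ 2 - y ^ 2) * √(r ^ 2 - y ^ 2)) = π / 2 * r ^ 4 := by
  have hF := intervalIntegral.integral_eq_sub_of_hasDerivAt_of_le (a := -r) (b := r)
    (f := fun y ↦ 1 / 3 * (y * ((r ^ 2 - y ^ 2) * √(r ^ 2 - y ^ 2)) +
      3 / 2 * r ^ 2 * (y * √(r ^ 2 - y ^ 2) + r ^ 2 * arcsin (y / r))))
    (f' := fun y ↦ 4 / 3 * ((r ^ 2 - y ^ 2) * √(r ^ 2 - y ^ 2))) (by linarith) ?_ ?_ ?_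
  · rw [hF]
    have : -r / r = -1 := by field_simp
    simp only [this, div_self hr.ne', arcsin_one, arcsin_neg_one]
    simp
    ring
  · refine Continuous.continuousOn ?_
    have : Continuous fun y ↦ arcsin (y / r) := continuous_arcsin.comp (by fun_prop)
    fun_prop
  · intro y hy
    have hpos : 0 < r ^ 2 - y ^ 2 := by nlinarith [hy.1, hy.2]
    set s := √(r ^ 2 - y ^ 2) with hs
    have hs0 : 0 < s := Real.sqrt_pos.2 hpos
    have hs2 : r ^ 2 - y ^ 2 = s ^ 2 := (Real.sq_sqrt hpos.le).symm
    have d1 : HasDerivAt (fun y : ℝ ↦ r ^ 2 - y ^ 2) (-(2 * y)) y := by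
      have := (hasDerivAt_pow 2 y).const_sub (r ^ 2)
      simpa using this
    have d2 : HasDerivAt (fun y : ℝ ↦ √(r ^ 2 - y ^ 2)) (-(2 * y) / (2 * s)) y := d1.sqrt hpos.ne'
    have hyr : y / r ≠ -1 ∧ y / r ≠ 1 := by
      constructor
      · intro h; rw [div_eq_iff hr.ne'] at h; linarith [hy.1]
      · intro h; rw [div_eq_iff hr.ne'] at h; linarith [hy.2]
    have d3 : HasDerivAt (fun y : ℝ ↦ arcsin (y / r)) (1 / s) y := by
      have := (Real.hasDerivAt_arcsin hyr.1 hyr.2).comp y ((hasDerivAt_id y).div_const r)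
      refine this.congr_deriv ?_
      have e : √(1 - (y / r) ^ 2) = s / r := by
        rw [show 1 - (y / r) ^ 2 = (s / r) ^ 2 by rw [div_pow, div_pow, ← hs2]; field_simp]
        exact Real.sqrt_sq (by positivity)
      rw [e]
      field_simp
    have d4 := (((hasDerivAt_id y).mul (d1.mul d2)).add ((((hasDerivAt_id y).mul d2).add
      (d3.const_mul (r ^ 2))).const_mul (3 / 2 * r ^ 2))).const_mul (1 / 3)
    refine d4.congr_deriv ?_
    simp only [Pi.mul_apply, id, ← hs]
    have : r ^ 2 = s ^ 2 + y ^ 2 := by linarith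
    rw [hs2, this]
    field_simp
    ring
  · exact Continuous.intervalIntegrable (by fun_prop) _ _

theorem heis_S_bound (u X : ℝ) (hu : 0 ≤ u) (huX : u ≤ X) :
    |∑ a ∈ Finset.Icc (-(⌈√X⌉₊ : ℤ)) ⌈√X⌉₊, ∑ b ∈ Finset.Icc (-(⌈√X⌉₊ : ℤ)) ⌈√X⌉₊,
      max (u - ((a:ℝ) ^ 2 + (b:ℝ) ^ 2)) 0 - π / 2 * u ^ 2| ≤ 7 * (X + 1) := by
  rcases hu.eq_or_lt with rfl | hu0
  · rw [Finset.sum_eq_zero]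
    · simp; linarith
    · intro a _
      refine Finset.sum_eq_zero fun b _ ↦ max_eq_right ?_
      nlinarith [sq_nonneg (a:ℝ), sq_nonneg (b:ℝ)]
  set r := √u with hr
  have hr0 : 0 < r := Real.sqrt_pos.2 hu0
  have hru : u = r ^ 2 := (Real.sq_sqrt hu).symm
  set R := √X with hR
  have hrR : r ≤ R := Real.sqrt_le_sqrt huX
  have hRX : X = R ^ 2 := (Real.sq_sqrt (hu.trans huX)).symm
  set M := ⌈R⌉₊ with hM
  have hM1 : r ≤ M := hrR.trans (Nat.le_ceil R)
  have hM2 : (M:ℝ) < R + 1 := Nat.ceil_lt_add_one (hr0.le.trans hrR)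
  have hs : ∀ a : ℝ, √(u - a ^ 2) ≤ r := fun a ↦ Real.sqrt_le_sqrt (by nlinarith [sq_nonneg a])
  have hT : ∀ a : ℝ, |∑ b ∈ Finset.Icc (-(M : ℤ)) M, max (u - a ^ 2 - (b : ℝ) ^ 2) 0 -
      4 / 3 * ((u - a ^ 2) * √(u - a ^ 2))| ≤ r := fun a ↦
    (heis_T_bound (u - a ^ 2) M ((hs a).trans hM1)).trans (hs a)
  simp only [← sub_sub]
  -- first step
  have step1 : |∑ a ∈ Finset.Icc (-(M : ℤ)) M, ∑ b ∈ Finset.Icc (-(M : ℤ)) M,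
      max (u - (a:ℝ) ^ 2 - (b:ℝ) ^ 2) 0 - ∑ a ∈ Finset.Icc (-(M : ℤ)) M,
      4 / 3 * ((u - (a:ℝ) ^ 2) * √(u - (a:ℝ) ^ 2))| ≤ (2 * M + 1) * r := by
    rw [← Finset.sum_sub_distrib]
    refine (Finset.abs_sum_le_sum_abs _ _).trans ((Finset.sum_le_sum fun (a : ℤ) _ ↦ hT (a : ℝ)).trans ?_)
    rw [Finset.sum_const, Int.card_Icc, nsmul_eq_mul]
    have : ((M:ℤ) + 1 - -(M:ℤ)).toNat = 2 * M + 1 := by omega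
    rw [this]; push_cast; rfl
  have step2 : ∑ a ∈ Finset.Icc (-(M : ℤ)) M,
      4 / 3 * ((u - (a:ℝ) ^ 2) * √(u - (a:ℝ) ^ 2)) =
      ∫ y in (-r)..r, ∑ b ∈ Finset.Icc (-(M : ℤ)) M, max (u - y ^ 2 - (b : ℝ) ^ 2) 0 := by
    rw [intervalIntegral.integral_finsetSum]
    · refine Finset.sum_congr rfl fun a _ ↦ ?_
      rw [← heis_int1 (u - (a:ℝ) ^ 2) r hr0.le (by nlinarith [sq_nonneg (a:ℝ)])]
      simp only [sub_right_comm]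
    · intro a _
      exact Continuous.intervalIntegrable (by fun_prop) _ _
  have step3 : |(∫ y in (-r)..r, ∑ b ∈ Finset.Icc (-(M : ℤ)) M, max (u - y ^ 2 - (b : ℝ) ^ 2) 0) -
      π / 2 * u ^ 2| ≤ r * (2 * r) := by
    have e := heis_int2 r hr0
    rw [show π / 2 * u ^ 2 = π / 2 * r ^ 4 by rw [hru]; ring, ← e,
      ← intervalIntegral.integral_sub (Continuous.intervalIntegrable (by fun_prop) _ _)
        (Continuous.intervalIntegrable (by fun_prop) _ _), ← hru, ← Real.norm_eq_abs]
    refine (intervalIntegral.norm_integral_le_of_norm_le_const (C := r) fun y _ ↦ ?_).trans ?_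
    · rw [Real.norm_eq_abs]; exact hT y
    · rw [abs_of_nonneg (by linarith)]; nlinarith
  rw [step2] at step1
  have := abs_sub_le _ _ _ |>.trans (add_le_add step1 step3)
  refine this.trans ?_
  have : (2 * (M:ℝ) + 1) * r ≤ (2 * (R + 1) + 1) * R := by gcongr
  have : r * (2 * r) ≤ R * (2 * R) := by gcongr
  nlinarith [sq_nonneg (R - 1)]

/-- the comparison function `c(v) = √(1-v)(√2 - √(1+v))`. -/
noncomputable def heisc (v : ℝ) : ℝ := √(1 - v) * (√2 - √(1 + v))

/-- its derivative -/
noncomputable def heisc1 (v : ℝ) : ℝ :=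
  -(√(1 - v) * (1 + 2 * v) / (√(1 + v) * (√2 * √(1 + v) + 2 * v)))

/-- its second derivative -/
noncomputable def heisc2 (v : ℝ) : ℝ :=
  1 / ((1 - v) * √(1 - v)) * (1 / ((1 + v) * √(1 + v)) - √2 / 4)

theorem heisc_one : heisc 1 = 0 := by simp [heisc]
theorem heisc1_one : heisc1 1 = 0 := by simp [heisc1]

theorem heisc_cont : Continuous heisc := by unfold heisc; fun_prop

theorem heisc1_cont : ContinuousOn heisc1 (Set.Icc 0 1) := by
  unfold heisc1
  refine ContinuousOn.neg (ContinuousOn.div (by fun_prop) (by fun_prop) fun v hv ↦ ?_)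
  have h0 : 0 ≤ v := hv.1
  have : 0 < √(1 + v) := Real.sqrt_pos.2 (by linarith)
  positivity

theorem heisc1_eq (v : ℝ) (hv : v ∈ Set.Ioo (0:ℝ) 1) :
    heisc1 v = -√2 / (2 * √(1 - v)) + v / (√(1 - v) * √(1 + v)) := by
  have h0 : 0 < v := hv.1
  have h1 : v < 1 := hv.2
  unfold heisc1
  set p := √(1 - v) with hp
  set m := √(1 + v) with hm
  have hp0 : 0 < p := Real.sqrt_pos.2 (by linarith)
  have hm0 : 0 < m := Real.sqrt_pos.2 (by linarith)
  have hp2 : p ^ 2 = 1 - v := Real.sq_sqrt (by linarith)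
  have hm2 : m ^ 2 = 1 + v := Real.sq_sqrt (by linarith)
  have h2 : √2 ^ 2 = 2 := Real.sq_sqrt (by norm_num)
  have h20 : 0 < √2 := by positivity
  have hd : 0 < √2 * m + 2 * v := by positivity
  rw [eq_comm, ← sub_eq_zero]
  have : -√2 / (2 * p) + v / (p * m) - -(p * (1 + 2 * v) / (m * (√2 * m + 2 * v))) =
    ((-√2 * m + 2 * v) * (√2 * m + 2 * v) + 2 * p ^ 2 * (1 + 2 * v)) / (2 * p * m * (√2 * m + 2 * v)) := by
    field_simp
    ring
  rw [this, hp2]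
  rw [show (-√2 * m + 2 * v) * (√2 * m + 2 * v) = 4 * v ^ 2 - √2 ^ 2 * m ^ 2 by ring, h2, hm2]
  rw [div_eq_zero_iff]; left; ring

theorem heis_dp (v : ℝ) (h1 : v < 1) : HasDerivAt (fun v ↦ √(1 - v)) (-1 / (2 * √(1 - v))) v :=
  ((hasDerivAt_id v).const_sub 1).sqrt (by simpa using (by linarith : (1 - v) ≠ 0))

theorem heis_dm (v : ℝ) (h1 : 0 < v) : HasDerivAt (fun v ↦ √(1 + v)) (1 / (2 * √(1 + v))) v :=
  ((hasDerivAt_id v).const_add 1).sqrt (by simpa using (by linarith : (1 + v) ≠ 0))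

theorem heisc_deriv (v : ℝ) (hv : v ∈ Set.Ioo (0:ℝ) 1) : HasDerivAt heisc (heisc1 v) v := by
  have h0 : 0 < v := hv.1
  have h1 : v < 1 := hv.2
  rw [heisc1_eq v hv]
  unfold heisc
  refine ((heis_dp v h1).mul ((heis_dm v h0).const_sub (√2))).congr_deriv ?_
  set p := √(1 - v) with hp
  set m := √(1 + v) with hm
  have hp0 : 0 < p := Real.sqrt_pos.2 (by linarith)
  have hm0 : 0 < m := Real.sqrt_pos.2 (by linarith)
  have hp2 : p ^ 2 = 1 - v := Real.sq_sqrt (by linarith)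
  have hm2 : m ^ 2 = 1 + v := Real.sq_sqrt (by linarith)
  have hv' : v = (m ^ 2 - p ^ 2) / 2 := by rw [hp2, hm2]; ring
  clear_value p m
  subst hv'
  field_simp
  ring

theorem heisc1_deriv (v : ℝ) (hv : v ∈ Set.Ioo (0:ℝ) 1) : HasDerivAt heisc1 (heisc2 v) v := by
  have h0 : 0 < v := hv.1
  have h1 : v < 1 := hv.2
  have hp0 : 0 < √(1 - v) := Real.sqrt_pos.2 (by linarith)
  have hm0 : 0 < √(1 + v) := Real.sqrt_pos.2 (by linarith)
  have hD : HasDerivAt (fun v ↦ -√2 / (2 * √(1 - v)) + v / (√(1 - v) * √(1 + v))) (heisc2 v) v := by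
    refine ((((hasDerivAt_const v (-√2))).div ((heis_dp v h1).const_mul 2) (by positivity)).add
      ((hasDerivAt_id v).div ((heis_dp v h1).mul (heis_dm v h0)) (by simp only [Pi.mul_apply]; positivity))).congr_deriv ?_
    unfold heisc2
    simp only [Pi.mul_apply, id]
    have hp2 : √(1 - v) ^ 2 = 1 - v := Real.sq_sqrt (by linarith)
    have hm2 : √(1 + v) ^ 2 = 1 + v := Real.sq_sqrt (by linarith)
    generalize √(1 - v) = p at *
    generalize √(1 + v) = m at *
    generalize √2 = w at *
    have e1 : 1 - v = p ^ 2 := hp2.symm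
    have e2 : 1 + v = m ^ 2 := hm2.symm
    rw [e1, e2]
    have hv' : v = 1 - p ^ 2 := by linarith
    have hm3 : m ^ 2 = 2 - p ^ 2 := by linarith
    have hpm : 0 < 2 - p ^ 2 := by rw [← hm3]; positivity
    have : -1 / (2 * p) * m + p * (1 / (2 * m)) = (p ^ 2 - m ^ 2) / (2 * p * m) := by field_simp; ring
    rw [this, hv']
    field_simp
    rw [hm3]
    ring
  refine hD.congr_of_eventuallyEq ?_
  filter_upwards [Ioo_mem_nhds h0 h1] with x hx
  exact heisc1_eq x hx

theorem heisc2_nonneg (v : ℝ) (hv : v ∈ Set.Ioo (0:ℝ) 1) : 0 ≤ heisc2 v := by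
  have h0 : 0 < v := hv.1
  have h1 : v < 1 := hv.2
  unfold heisc2
  have hp0 : 0 < √(1 - v) := Real.sqrt_pos.2 (by linarith)
  have hm0 : 0 < √(1 + v) := Real.sqrt_pos.2 (by linarith)
  have hm1 : √(1 + v) ≤ √2 := Real.sqrt_le_sqrt (by linarith)
  have h2 : √2 * √2 = 2 := Real.mul_self_sqrt (by norm_num)
  have h20 : 0 < √2 := by positivity
  have : √2 / 4 ≤ 1 / ((1 + v) * √(1 + v)) := by
    rw [div_le_div_iff₀ (by norm_num) (by nlinarith)]
    have : (1 + v) * √(1 + v) ≤ 2 * √2 := by gcongr; linarith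
    nlinarith
  have a : 0 < (1 - v) * √(1 - v) := mul_pos (by linarith) hp0
  exact mul_nonneg (by positivity) (by linarith)

theorem heisc2_integrable : IntervalIntegrable heisc2 MeasureTheory.volume 0 1 := by
  rw [intervalIntegrable_iff_integrableOn_Ioc_of_le zero_le_one]
  exact intervalIntegral.integrableOn_deriv_of_nonneg heisc1_cont heisc1_deriv heisc2_nonneg

theorem heisc2_int0 : ∫ v in (0:ℝ)..1, heisc2 v = √2 / 2 := by
  rw [intervalIntegral.integral_eq_sub_of_hasDerivAt_of_le zero_le_one heisc1_cont heisc1_deriv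
    heisc2_integrable, heisc1_one]
  have : √2 * √2 = 2 := Real.mul_self_sqrt (by norm_num)
  simp [heisc1]
  field_simp
  linarith

theorem heisc2_int2 : ∫ v in (0:ℝ)..1, v ^ 2 * heisc2 v = 4 * √2 / 3 - π / 2 := by
  have hF := intervalIntegral.integral_eq_sub_of_hasDerivAt_of_le (a := 0) (b := 1)
    (f := fun v ↦ v ^ 2 * heisc1 v - 2 * v * heisc v + 2 * (-(2 * √2 / 3) * ((1 - v) * √(1 - v)) -
      1 / 2 * (v * (√(1 - v) * √(1 + v)) + arcsin v)))
    (f' := fun v ↦ v ^ 2 * heisc2 v) zero_le_one ?_ ?_ ?_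
  · rw [hF, heisc_one, heisc1_one]
    simp
    ring
  · have h1 := heisc1_cont
    have h2 := heisc_cont
    have h3 := continuous_arcsin
    fun_prop
  · intro v hv
    have h0 : 0 < v := hv.1
    have h1 : v < 1 := hv.2
    have hp0 : 0 < √(1 - v) := Real.sqrt_pos.2 (by linarith)
    have hm0 : 0 < √(1 + v) := Real.sqrt_pos.2 (by linarith)
    have d := ((((hasDerivAt_pow 2 v).mul (heisc1_deriv v hv)).sub
      (((hasDerivAt_id v).const_mul 2).mul (heisc_deriv v hv))).add
      ((((((hasDerivAt_id v).const_sub 1).mul (heis_dp v h1)).const_mul (-(2 * √2 / 3))).sub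
        ((((hasDerivAt_id v).mul ((heis_dp v h1).mul (heis_dm v h0))).add
          (Real.hasDerivAt_arcsin (by linarith) h1.ne)).const_mul (1 / 2))).const_mul 2))
    refine d.congr_deriv ?_
    simp only [Pi.mul_apply, id]
    have e : √(1 - v ^ 2) = √(1 - v) * √(1 + v) := by
      rw [← Real.sqrt_mul (by linarith)]; congr 1; ring
    rw [e]
    unfold heisc
    have hp2 : √(1 - v) ^ 2 = 1 - v := Real.sq_sqrt (by linarith)
    have hm2 : √(1 + v) ^ 2 = 1 + v := Real.sq_sqrt (by linarith)
    generalize √(1 - v) = p at *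
    generalize √(1 + v) = m at *
    generalize √2 = w at *
    generalize heisc1 v = x1
    generalize heisc2 v = x2
    have hv' : v = 1 - p ^ 2 := by linarith
    have hm3 : m ^ 2 = 2 - p ^ 2 := by linarith
    rw [hv']
    field_simp
    simp only [Nat.cast_ofNat]
    ring_nf
    simp only [hm3]
    ring
  · exact (heisc2_integrable.continuousOn_mul (continuous_pow 2).continuousOn)

theorem heisc_repr (x : ℝ) (hx0 : 0 ≤ x) (hx : x ≤ 1) :
    ∫ v in (0:ℝ)..1, max (v - x) 0 * heisc2 v = heisc x := by
  have hi : ∀ a b, a ∈ Set.Icc (0:ℝ) 1 → b ∈ Set.Icc (0:ℝ) 1 →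
      IntervalIntegrable (fun v ↦ max (v - x) 0 * heisc2 v) MeasureTheory.volume a b := by
    intro a b ha hb
    have h1 : IntervalIntegrable (fun v ↦ max (v - x) 0 * heisc2 v) MeasureTheory.volume 0 1 :=
      heisc2_integrable.continuousOn_mul (by fun_prop)
    refine h1.mono_set ?_
    rw [Set.uIcc_of_le (zero_le_one' ℝ)]
    exact Set.uIcc_subset_Icc ha hb
  have m0 : (0:ℝ) ∈ Set.Icc (0:ℝ) 1 := by simp
  have m1 : (1:ℝ) ∈ Set.Icc (0:ℝ) 1 := by simp
  have mx : x ∈ Set.Icc (0:ℝ) 1 := ⟨hx0, hx⟩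
  rw [← intervalIntegral.integral_add_adjacent_intervals (hi 0 x m0 mx) (hi x 1 mx m1)]
  have i1 : ∫ v in (0:ℝ)..x, max (v - x) 0 * heisc2 v = 0 := by
    rw [intervalIntegral.integral_congr (g := fun _ ↦ 0)]
    · simp
    · intro v hv
      rw [Set.uIcc_of_le hx0] at hv
      simp only
      rw [max_eq_right (by linarith [hv.2]), zero_mul]
  have i2 : ∫ v in x..1, max (v - x) 0 * heisc2 v = ∫ v in x..1, (v - x) * heisc2 v := by
    refine intervalIntegral.integral_congr fun v hv ↦ ?_
    rw [Set.uIcc_of_le hx] at hv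
    rw [max_eq_left (by linarith [hv.1])]
  have hx1 : IntervalIntegrable (fun v ↦ (v - x) * heisc2 v) MeasureTheory.volume x 1 := by
    refine IntervalIntegrable.mono_set ((heisc2_integrable.continuousOn_mul (g := fun v ↦ v - x) (by fun_prop))) ?_
    rw [Set.uIcc_of_le (zero_le_one' ℝ)]
    exact Set.uIcc_subset_Icc mx m1
  rw [i1, i2, intervalIntegral.integral_eq_sub_of_hasDerivAt_of_le hx
    (f := fun v ↦ (v - x) * heisc1 v - heisc v) ?_ ?_ hx1]
  · simp [heisc_one, heisc1_one]
  · have h1 := heisc1_cont.mono (Set.Icc_subset_Icc_left (b := 1) hx0)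
    have h2 := heisc_cont
    fun_prop
  · intro v hv
    have hv' : v ∈ Set.Ioo (0:ℝ) 1 := ⟨by linarith [hv.1], hv.2⟩
    refine ((((hasDerivAt_id v).sub_const x).mul (heisc1_deriv v hv')).sub (heisc_deriv v hv')).congr_deriv ?_
    simp

theorem heis_term (X q : ℝ) (hX : 0 < X) (hq : 0 ≤ q) :
    √2 * √X * (2 * √(X - q)) - 2 * √(X ^ 2 - q ^ 2) =
      2 * ∫ v in (0:ℝ)..1, max (X * v - q) 0 * heisc2 v := by
  rcases le_or_gt q X with h | h
  · have e : ∀ v, max (X * v - q) 0 * heisc2 v = X * (max (v - q / X) 0 * heisc2 v) := by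
      intro v
      rw [← mul_assoc, mul_max_of_nonneg _ _ hX.le]
      congr 2
      · field_simp
      · simp
    simp only [e]
    rw [intervalIntegral.integral_const_mul, heisc_repr _ (by positivity) (by rw [div_le_one hX]; exact h)]
    unfold heisc
    have e1 : 1 - q / X = (X - q) / X := by field_simp
    have e2 : 1 + q / X = (X + q) / X := by field_simp
    rw [e1, e2, Real.sqrt_div (by linarith), Real.sqrt_div (by linarith),
      show X ^ 2 - q ^ 2 = (X - q) * (X + q) by ring, Real.sqrt_mul (by linarith)]
    have hs : 0 < √X := Real.sqrt_pos.2 hX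
    have hs2 : X = √X ^ 2 := (Real.sq_sqrt hX.le).symm
    generalize √(X - q) = a
    generalize √(X + q) = b
    generalize √X = x at *
    subst hs2
    field_simp
  · rw [Real.sqrt_eq_zero_of_nonpos (by linarith : X - q ≤ 0), Real.sqrt_eq_zero_of_nonpos (by nlinarith : X ^ 2 - q ^ 2 ≤ 0),
      intervalIntegral.integral_congr (g := fun _ ↦ 0)]
    · simp
    · intro v hv
      rw [Set.uIcc_of_le zero_le_one] at hv
      simp only
      rw [max_eq_right (by nlinarith [hv.2]), zero_mul]

theorem heis_out (X : ℝ) (z : ℤ × ℤ)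
    (hz : z ∉ Finset.Icc (-(⌈√X⌉₊ : ℤ)) ⌈√X⌉₊ ×ˢ Finset.Icc (-(⌈√X⌉₊ : ℤ)) ⌈√X⌉₊) : X ≤ heisQ z := by
  by_contra! h
  unfold heisQ at h
  apply hz
  have key : ∀ a : ℤ, (a:ℝ) ^ 2 ≤ X → a ∈ Finset.Icc (-(⌈√X⌉₊ : ℤ)) ⌈√X⌉₊ := by
    intro a ha
    have h1 : |(a:ℝ)| ≤ ⌈√X⌉₊ := (Real.abs_le_sqrt ha).trans (Nat.le_ceil _)
    rw [← Int.cast_abs] at h1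
    have h2 : |a| ≤ (⌈√X⌉₊ : ℤ) := by exact_mod_cast h1
    rw [Finset.mem_Icc]
    exact abs_le.1 h2
  rw [Finset.mem_product]
  exact ⟨key _ (by nlinarith [sq_nonneg (z.2:ℝ)]), key _ (by nlinarith [sq_nonneg (z.1:ℝ)])⟩

theorem heis_rem (X : ℝ) (hX : 0 < X) :
    |∑' z : ℤ × ℤ, (√2 * √X * (2 * √(X - heisQ z)) - 2 * √(X ^ 2 - heisQ z ^ 2)) -
      (√2 * (4 * π / 3) - π ^ 2 / 2) * X ^ 2| ≤ 7 * √2 * (X + 1) := by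
  set I := Finset.Icc (-(⌈√X⌉₊ : ℤ)) ⌈√X⌉₊ with hI
  rw [tsum_eq_sum (s := I ×ˢ I)]
  swap
  · intro z hz
    have := heis_out X z hz
    rw [Real.sqrt_eq_zero_of_nonpos (by linarith : X - heisQ z ≤ 0), Real.sqrt_eq_zero_of_nonpos (by nlinarith : X ^ 2 - heisQ z ^ 2 ≤ 0)]
    simp
  have hIntg : ∀ f : ℝ → ℝ, Continuous f → IntervalIntegrable (fun v ↦ f v * heisc2 v) MeasureTheory.volume 0 1 :=
    fun f hf ↦ heisc2_integrable.continuousOn_mul hf.continuousOn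
  have e1 : ∑ z ∈ I ×ˢ I, (√2 * √X * (2 * √(X - heisQ z)) - 2 * √(X ^ 2 - heisQ z ^ 2)) =
      2 * ∫ v in (0:ℝ)..1, (∑ a ∈ I, ∑ b ∈ I, max (X * v - ((a:ℝ) ^ 2 + (b:ℝ) ^ 2)) 0) * heisc2 v := by
    simp only [← Finset.sum_product', Finset.sum_mul]
    rw [intervalIntegral.integral_finsetSum (fun z _ ↦ hIntg _ (by fun_prop)), Finset.mul_sum]
    refine Finset.sum_congr rfl fun z _ ↦ ?_
    rw [heis_term X _ hX (heisQ_nonneg z)]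
    rfl
  have e2 : (√2 * (4 * π / 3) - π ^ 2 / 2) * X ^ 2 = 2 * ∫ v in (0:ℝ)..1, (π / 2 * (X * v) ^ 2) * heisc2 v := by
    have : ∀ v, (π / 2 * (X * v) ^ 2) * heisc2 v = (π / 2 * X ^ 2) * (v ^ 2 * heisc2 v) := fun v ↦ by ring
    simp only [this]
    rw [intervalIntegral.integral_const_mul, heisc2_int2]
    ring
  rw [e1, e2, ← mul_sub, ← intervalIntegral.integral_sub (hIntg _ (by fun_prop)) (hIntg _ (by fun_prop)),
    abs_mul, abs_two, ← Real.norm_eq_abs]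
  have hb : ‖∫ v in (0:ℝ)..1, ((∑ a ∈ I, ∑ b ∈ I, max (X * v - ((a:ℝ) ^ 2 + (b:ℝ) ^ 2)) 0) * heisc2 v -
      (π / 2 * (X * v) ^ 2) * heisc2 v)‖ ≤ ∫ v in (0:ℝ)..1, 7 * (X + 1) * heisc2 v := by
    refine intervalIntegral.norm_integral_le_of_norm_le zero_le_one ?_ (heisc2_integrable.const_mul _)
    have : ∀ᵐ v : ℝ, v ≠ 1 := by
      simp [MeasureTheory.ae_iff]
    filter_upwards [this] with v hv1 hv
    have hv' : v ∈ Set.Ioo (0:ℝ) 1 := ⟨hv.1, lt_of_le_of_ne hv.2 hv1⟩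
    rw [← sub_mul, norm_mul, Real.norm_of_nonneg (heisc2_nonneg v hv'), Real.norm_eq_abs]
    refine mul_le_mul_of_nonneg_right ?_ (heisc2_nonneg v hv')
    exact heis_S_bound (X * v) X (by have := hv.1; positivity) (by nlinarith [hv.2])
  rw [intervalIntegral.integral_const_mul, heisc2_int0] at hb
  linarith

/-- `ρ(y) = 2⌈y⌉ - 1 - 2 y`. -/
noncomputable def heisrho (y : ℝ) : ℝ := 2 * ⌈y⌉ - 1 - 2 * y

theorem heisrho_abs (y : ℝ) : |heisrho y| ≤ 1 := by
  unfold heisrho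
  have h1 := Int.le_ceil y
  have h2 := Int.ceil_lt_add_one y
  rw [abs_le]; constructor <;> linarith

theorem heisrho_measurable : Measurable heisrho := by
  unfold heisrho
  have : Measurable fun y : ℝ ↦ ((⌈y⌉ : ℤ) : ℝ) := (measurable_from_top (f := fun n : ℤ ↦ (n:ℝ))).comp Int.measurable_ceil
  fun_prop

/-- discrepancy of the fibre over `z`. -/
noncomputable def heisp (z : ℤ × ℤ) (t : ℝ) : ℝ :=
  if heisQ z < t ^ 2 then heisrho (√(t ^ 4 - heisQ z ^ 2)) else 0

theorem heisp_abs (z : ℤ × ℤ) (t : ℝ) : |heisp z t| ≤ 1 := by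
  unfold heisp
  split_ifs
  · exact heisrho_abs _
  · simp

theorem heis_fibre_set (u : ℝ) (hu : 0 < u) :
    {w : ℤ | (w:ℝ) ^ 2 < u} = ((Finset.Icc (-(⌈√u⌉ - 1)) (⌈√u⌉ - 1) : Finset ℤ) : Set ℤ) := by
  ext w
  simp only [Set.mem_setOf_eq, Finset.coe_Icc, Set.mem_Icc]
  rw [← abs_le, ← sq_abs, ← Int.cast_abs, ← Real.lt_sqrt (by positivity), ← Int.lt_ceil]
  omega

theorem heis_fibre_card (u : ℝ) (hu : 0 < u) :
    (({w : ℤ | (w:ℝ) ^ 2 < u}.ncard : ℕ) : ℝ) = 2 * ⌈√u⌉ - 1 := by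
  rw [heis_fibre_set u hu, Set.ncard_coe_finset, Int.card_Icc]
  have h1 : 1 ≤ ⌈√u⌉ := Int.one_le_ceil_iff.2 (Real.sqrt_pos.2 hu)
  have h2 : (((⌈√u⌉ - 1 + 1 - -(⌈√u⌉ - 1)).toNat : ℕ) : ℤ) = 2 * ⌈√u⌉ - 1 := by omega
  have h3 : ((((⌈√u⌉ - 1 + 1 - -(⌈√u⌉ - 1)).toNat : ℕ) : ℤ) : ℝ) = ((2 * ⌈√u⌉ - 1 : ℤ) : ℝ) := by rw [h2]
  push_cast at h3
  simpa using h3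

theorem heis_fibre_p (t : ℝ) (z : ℤ × ℤ) :
    (({w : ℤ | (w:ℝ) ^ 2 < t ^ 4 - heisQ z ^ 2}.ncard : ℕ) : ℝ) =
      heisp z t + 2 * √(t ^ 4 - heisQ z ^ 2) := by
  have hq := heisQ_nonneg z
  unfold heisp
  split_ifs with h
  · rw [heis_fibre_card _ (by nlinarith), heisrho]
    ring
  · have h0 : t ^ 4 - heisQ z ^ 2 ≤ 0 := by nlinarith [sq_nonneg t]
    rw [Real.sqrt_eq_zero_of_nonpos h0]
    have : {w : ℤ | (w:ℝ) ^ 2 < t ^ 4 - heisQ z ^ 2} = ∅ := by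
      ext w
      simp only [Set.mem_setOf_eq, Set.mem_empty_iff_false, iff_false, not_lt]
      nlinarith [sq_nonneg (w:ℝ)]
    rw [this]; simp

theorem heis_N_sum (t : ℝ) (J : Finset (ℤ × ℤ)) (hJ : ∀ z, z ∉ J → t ^ 2 ≤ heisQ z) :
    (N t : ℝ) = ∑ z ∈ J, (heisp z t + 2 * √(t ^ 4 - heisQ z ^ 2)) := by
  set S : Set (ℤ × ℤ × ℤ) := {p : ℤ × ℤ × ℤ |
    (((p.1 : ℝ) ^ 2 + (p.2.1 : ℝ) ^ 2) ^ 2 + (p.2.2 : ℝ) ^ 2) < t ^ 4} with hS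
  have hmaps : ∀ p ∈ S, (p.1, p.2.1) ∈ J := by
    intro p hp
    by_contra h
    have h1 := hJ _ h
    have hp : (((p.1 : ℝ) ^ 2 + (p.2.1 : ℝ) ^ 2) ^ 2 + (p.2.2 : ℝ) ^ 2) < t ^ 4 := hp
    simp only [heisQ] at h1
    nlinarith [sq_nonneg (p.2.2:ℝ), sq_nonneg t]
  have hfin : S.Finite := by
    have : S ⊆ (fun p : (ℤ × ℤ) × ℤ ↦ (p.1.1, p.1.2, p.2)) ''
        ((J : Set (ℤ × ℤ)) ×ˢ {w : ℤ | (w:ℝ) ^ 2 < t ^ 4 + 1}) := by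
      intro p hp
      refine ⟨((p.1, p.2.1), p.2.2), ⟨hmaps p hp, ?_⟩, rfl⟩
      have hp : (((p.1 : ℝ) ^ 2 + (p.2.1 : ℝ) ^ 2) ^ 2 + (p.2.2 : ℝ) ^ 2) < t ^ 4 := hp
      show (p.2.2:ℝ) ^ 2 < t ^ 4 + 1
      nlinarith [sq_nonneg ((p.1 : ℝ) ^ 2 + (p.2.1 : ℝ) ^ 2)]
    refine Set.Finite.subset (Set.Finite.image _ (Set.Finite.prod J.finite_toSet ?_)) this
    rw [heis_fibre_set _ (by positivity)]
    exact Finset.finite_toSet _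
  have hN : N t = hfin.toFinset.card := by
    unfold N
    exact Set.ncard_eq_toFinset_card S hfin
  rw [hN, Finset.card_eq_sum_card_fiberwise (f := fun p : ℤ × ℤ × ℤ ↦ (p.1, p.2.1)) (t := J)
    (fun p hp ↦ hmaps p (by simpa using hp))]
  push_cast
  refine Finset.sum_congr rfl fun z _ ↦ ?_
  rw [← heis_fibre_p]
  congr 1
  rw [← Set.ncard_coe_finset, ← Set.ncard_image_of_injective (f := fun w : ℤ ↦ (z.1, z.2, w)) {w : ℤ | (w:ℝ) ^ 2 < t ^ 4 - heisQ z ^ 2}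
    (fun a b h ↦ by simpa using h)]
  congr 1
  ext ⟨a, b, w⟩
  simp only [Finset.coe_filter, Set.Finite.mem_toFinset, Set.mem_setOf_eq, hS, Set.mem_image, Prod.mk.injEq]
  constructor
  · rintro ⟨h1, h2⟩
    refine ⟨w, ?_, by rw [← h2], by rw [← h2], rfl⟩
    rw [← h2, heisQ]
    simp only
    linarith
  · rintro ⟨w', h1, h2, h3, h4⟩
    subst h2 h3 h4
    refine ⟨?_, rfl⟩
    rw [heisQ] at h1
    linarith

/-- `P(t)`, the sum of the fibre discrepancies over `z ≠ 0`. -/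
noncomputable def heisP (t : ℝ) : ℝ := ∑' z : ℤ × ℤ, if z = 0 then 0 else heisp z t

theorem heis_decomp (t : ℝ) (ht : 0 < t) :
    |(N t : ℝ) - π ^ 2 / 2 * t ^ 4 - √2 * t * heisD t - heisP t| ≤ 7 * √2 * (t ^ 2 + 1) + 1 := by
  set X := t ^ 2 with hX
  have hX0 : 0 < X := by positivity
  have hXt : √X = t := Real.sqrt_sq ht.le
  set J := (heis_finite X).toFinset with hJ
  have hJ' : ∀ z, z ∉ J → X < heisQ z := by
    intro z hz
    simpa [hJ] using hz
  have hN := heis_N_sum t J (fun z hz ↦ (hJ' z hz).le)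
  have hA : heisA t = ∑ z ∈ J, 2 * √(X - heisQ z) := by
    unfold heisA
    refine tsum_eq_sum fun z hz ↦ ?_
    rw [Real.sqrt_eq_zero_of_nonpos (by linarith [hJ' z hz])]; simp
  have h0J : (0 : ℤ × ℤ) ∈ J := by
    simp [hJ, heisQ_zero, hX0.le]
  have hP : heisP t = ∑ z ∈ J, heisp z t - heisp 0 t := by
    unfold heisP
    rw [tsum_eq_sum (s := J), ← Finset.sum_erase_eq_sub h0J]
    · rw [← Finset.sum_erase J (a := 0) (by simp)]
      refine Finset.sum_congr rfl fun z hz ↦ ?_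
      simp [Finset.ne_of_mem_erase hz]
    · intro z hz
      have := hJ' z hz
      simp only [heisp]
      rw [if_neg (not_lt.2 this.le)]; simp
  have hR := heis_rem X hX0
  rw [tsum_eq_sum (s := J), Finset.sum_sub_distrib, ← Finset.mul_sum, ← hA, hXt] at hR
  swap
  · intro z hz
    have := hJ' z hz
    rw [Real.sqrt_eq_zero_of_nonpos (by linarith : X - heisQ z ≤ 0),
      Real.sqrt_eq_zero_of_nonpos (by nlinarith : X ^ 2 - heisQ z ^ 2 ≤ 0)]
    simp
  rw [Finset.sum_add_distrib] at hN
  have h4 : t ^ 4 = X ^ 2 := by rw [hX]; ring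
  rw [h4] at hN
  have e : (N t : ℝ) - π ^ 2 / 2 * t ^ 4 - √2 * t * heisD t - heisP t =
    heisp 0 t - (√2 * t * heisA t - ∑ z ∈ J, 2 * √(X ^ 2 - heisQ z ^ 2) - (√2 * (4 * π / 3) - π ^ 2 / 2) * X ^ 2) := by
    rw [hP, hN, heisD, hX]
    ring
  rw [e]
  have := heisp_abs 0 t
  calc _ ≤ |heisp 0 t| + _ := abs_sub _ _
    _ ≤ _ := by linarith

theorem heis_jstep (κ κ' : ℝ → ℂ) (hκ : ∀ y, HasDerivAt κ (κ' y) y) (j : ℕ) (B : ℝ)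
    (hB : ∀ y ∈ Set.Icc (j:ℝ) (j + 1), ‖κ' y‖ ≤ B) :
    ‖∫ y in (j:ℝ)..((j + 1 : ℕ) : ℝ), (heisrho y : ℂ) * κ y‖ ≤ B := by
  have hc : Continuous κ := continuous_iff_continuousAt.2 fun y ↦ (hκ y).continuousAt
  have hj : (j:ℝ) ≤ ((j + 1 : ℕ) : ℝ) := by push_cast; linarith
  have e1 : ∫ y in (j:ℝ)..((j + 1 : ℕ) : ℝ), (heisrho y : ℂ) * κ y =
      ∫ y in (j:ℝ)..((j + 1 : ℕ) : ℝ), ((2 * j + 1 - 2 * y : ℝ) : ℂ) * κ y := by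
    refine intervalIntegral.integral_congr_ae (Filter.Eventually.of_forall fun y hy ↦ ?_)
    rw [Set.uIoc_of_le hj] at hy
    have : ⌈y⌉ = (j:ℤ) + 1 := by
      rw [Int.ceil_eq_iff]
      have h1 := hy.1
      have h2 := hy.2
      push_cast at h2 ⊢
      constructor <;> linarith
    congr 2
    rw [heisrho, this]
    push_cast; ring
  have e2 : ∫ y in (j:ℝ)..((j + 1 : ℕ) : ℝ), ((2 * j + 1 - 2 * y : ℝ) : ℂ) * κ j = 0 := by
    rw [intervalIntegral.integral_mul_const, intervalIntegral.integral_ofReal]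
    have : ∫ y in (j:ℝ)..((j + 1 : ℕ) : ℝ), (2 * (j:ℝ) + 1 - 2 * y) = 0 := by
      rw [intervalIntegral.integral_sub (by simp) (Continuous.intervalIntegrable (by fun_prop) _ _),
        intervalIntegral.integral_const, intervalIntegral.integral_const_mul, integral_id]
      push_cast
      simp only [smul_eq_mul]
      ring
    rw [this]; simp
  rw [e1, ← sub_zero (∫ y in (j:ℝ)..((j + 1 : ℕ) : ℝ), ((2 * j + 1 - 2 * y : ℝ) : ℂ) * κ y), ← e2,
    ← intervalIntegral.integral_sub (Continuous.intervalIntegrable (by fun_prop) _ _)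
      (Continuous.intervalIntegrable (by fun_prop) _ _)]
  have hB0 : 0 ≤ B := (norm_nonneg _).trans (hB j ⟨le_rfl, by linarith⟩)
  refine (intervalIntegral.norm_integral_le_of_norm_le_const (C := B) fun y hy ↦ ?_).trans ?_
  · rw [Set.uIoc_of_le hj] at hy
    have h1 := hy.1
    have h2 := hy.2
    push_cast at h2
    rw [← mul_sub, norm_mul, Complex.norm_real, Real.norm_eq_abs]
    have k1 : |2 * (j:ℝ) + 1 - 2 * y| ≤ 1 := by rw [abs_le]; constructor <;> linarith
    have k2 : ‖κ y - κ j‖ ≤ B * ‖y - (j:ℝ)‖ :=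
      (convex_Icc (j:ℝ) (j + 1)).norm_image_sub_le_of_norm_hasDerivWithin_le
        (fun x _ ↦ (hκ x).hasDerivWithinAt) hB ⟨le_rfl, by linarith⟩ ⟨h1.le, h2⟩
    have k3 : ‖y - (j:ℝ)‖ ≤ 1 := by rw [Real.norm_of_nonneg (by linarith)]; linarith
    calc |2 * (j:ℝ) + 1 - 2 * y| * ‖κ y - κ j‖ ≤ 1 * (B * 1) := by
          refine mul_le_mul k1 (k2.trans (by gcongr)) (norm_nonneg _) zero_le_one
      _ = B := by ring
  · push_cast; simp

theorem heis_exp_bound (σ t M J : ℝ) (hσ : 0 < σ) (ht : 0 < t) (hM0 : 0 < M) (hJ0 : 0 < J)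
    (hM : M ≤ t ^ 4) (hJ : J ≤ t ^ 4) :
    exp (-(σ * t)) / t ^ 3 ≤ σ ^ (-(3/2) : ℝ) * (M ^ (-(9/16) : ℝ) * J ^ (-(9/16) : ℝ)) := by
  have hx : 0 < σ * t := by positivity
  have h1 : exp (-(σ * t)) ≤ (σ * t) ^ (-(3/2) : ℝ) := by
    rw [Real.exp_neg, Real.rpow_neg hx.le]
    refine inv_anti₀ (by positivity) ?_
    have : (σ * t) ^ (3/2 : ℝ) = (σ * t) * √(σ * t) := by
      rw [Real.sqrt_eq_rpow, show (3/2 : ℝ) = 1 + 1/2 by norm_num, Real.rpow_add hx, Real.rpow_one]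
    rw [this]
    have h2 := Real.quadratic_le_exp_of_nonneg hx.le
    have h3 : √(σ * t) ≤ 1 + (σ * t) / 2 := by
      rw [Real.sqrt_le_left (by positivity)]
      nlinarith [sq_nonneg (σ * t)]
    nlinarith
  have h2 : M ^ (-(9/16) : ℝ) ≥ (t ^ 4) ^ (-(9/16) : ℝ) :=
    Real.rpow_le_rpow_of_nonpos hM0 hM (by norm_num)
  have h3 : J ^ (-(9/16) : ℝ) ≥ (t ^ 4) ^ (-(9/16) : ℝ) :=
    Real.rpow_le_rpow_of_nonpos hJ0 hJ (by norm_num)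
  have h4 : (t ^ 4) ^ (-(9/16) : ℝ) = t ^ (-(9/4) : ℝ) := by
    rw [← Real.rpow_natCast, ← Real.rpow_mul ht.le]; norm_num
  rw [h4] at h2 h3
  have h5 : (1:ℝ) / t ^ 3 = t ^ (-3 : ℝ) := by
    rw [Real.rpow_neg ht.le, one_div]; norm_cast
  calc exp (-(σ * t)) / t ^ 3 ≤ (σ * t) ^ (-(3/2) : ℝ) / t ^ 3 := by gcongr
    _ = σ ^ (-(3/2) : ℝ) * (t ^ (-(9/4) : ℝ) * t ^ (-(9/4) : ℝ)) := by
      rw [Real.mul_rpow hσ.le ht.le, div_eq_mul_one_div, h5, mul_assoc, ← Real.rpow_add ht, ← Real.rpow_add ht]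
      norm_num
    _ ≤ _ := by gcongr

/-- the substitution `t = τ(y) = (y² + m²)^{1/4}`. -/
noncomputable def heistau (m y : ℝ) : ℝ := √√(y ^ 2 + m ^ 2)

theorem heistau_pos (m y : ℝ) (hm : 0 < m) : 0 < heistau m y := by unfold heistau; positivity

theorem heistau_sq (m y : ℝ) : heistau m y ^ 2 = √(y ^ 2 + m ^ 2) := by
  unfold heistau; rw [Real.sq_sqrt (by positivity)]

theorem heistau_four (m y : ℝ) : heistau m y ^ 4 = y ^ 2 + m ^ 2 := by
  rw [show heistau m y ^ 4 = (heistau m y ^ 2) ^ 2 by ring, heistau_sq, Real.sq_sqrt (by positivity)]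

theorem heistau_deriv (m y : ℝ) (hm : 0 < m) :
    HasDerivAt (heistau m) (y / (2 * heistau m y ^ 3)) y := by
  have h0 : 0 < y ^ 2 + m ^ 2 := by positivity
  have d1 : HasDerivAt (fun y : ℝ ↦ y ^ 2 + m ^ 2) (2 * y) y := by
    simpa using (hasDerivAt_pow 2 y).add_const (m ^ 2)
  have d2 := (d1.sqrt h0.ne').sqrt (by positivity)
  refine d2.congr_deriv ?_
  have := heistau_pos m y hm
  change 2 * y / (2 * √(y ^ 2 + m ^ 2)) / (2 * heistau m y) = _
  rw [← heistau_sq]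
  field_simp

theorem heistau_image (m : ℝ) (hm : 0 < m) : heistau m '' Set.Ioi 0 = Set.Ioi (√m) := by
  ext t
  constructor
  · rintro ⟨y, hy, rfl⟩
    have hy : 0 < y := hy
    show √m < √√(y ^ 2 + m ^ 2)
    refine Real.sqrt_lt_sqrt hm.le ?_
    rw [Real.lt_sqrt hm.le]
    nlinarith
  · intro ht
    have ht : √m < t := ht
    have ht0 : 0 < t := lt_of_le_of_lt (Real.sqrt_nonneg m) ht
    have h1 : m < t ^ 2 := (Real.sqrt_lt' ht0).1 ht
    have h2 : 0 < t ^ 4 - m ^ 2 := by nlinarith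
    refine ⟨√(t ^ 4 - m ^ 2), Real.sqrt_pos.2 h2, ?_⟩
    unfold heistau
    rw [Real.sq_sqrt h2.le, show t ^ 4 - m ^ 2 + m ^ 2 = (t ^ 2) ^ 2 by ring, Real.sqrt_sq (by positivity),
      Real.sqrt_sq ht0.le]

theorem heistau_inj (m : ℝ) : Set.InjOn (heistau m) (Set.Ioi 0) := by
  intro x hx y hy h
  have hx : 0 < x := hx
  have hy : 0 < y := hy
  have h4 := heistau_four m x
  rw [h, heistau_four] at h4
  nlinarith

/-- the transformed kernel -/
noncomputable def heiskappa (m : ℝ) (s : ℂ) (y : ℝ) : ℂ :=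
  ((y / (2 * heistau m y ^ 4) : ℝ) : ℂ) * Complex.exp (-(s * heistau m y))

theorem heiskappa_deriv (m : ℝ) (hm : 0 < m) (s : ℂ) (y : ℝ) : HasDerivAt (heiskappa m s)
    ((((1 / (2 * heistau m y ^ 4) - y ^ 2 / heistau m y ^ 8 : ℝ) : ℂ) -
      s * ((y ^ 2 / (4 * heistau m y ^ 7) : ℝ) : ℂ)) * Complex.exp (-(s * heistau m y))) y := by
  have ht := heistau_pos m y hm
  have d1 := heistau_deriv m y hm
  have d2 : HasDerivAt (fun y ↦ y / (2 * heistau m y ^ 4))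
      (1 / (2 * heistau m y ^ 4) - y ^ 2 / heistau m y ^ 8) y := by
    refine ((hasDerivAt_id y).div ((d1.pow 4).const_mul 2) (by simp only [Pi.pow_apply]; positivity)).congr_deriv ?_
    simp only [id, Pi.pow_apply]
    field_simp
    norm_num
    try ring
  have d3 : HasDerivAt (fun y ↦ Complex.exp (-(s * heistau m y)))
      (Complex.exp (-(s * heistau m y)) * (-(s * ((y / (2 * heistau m y ^ 3) : ℝ) : ℂ)))) y :=
    HasDerivAt.cexp ((d1.ofReal_comp.const_mul s).neg)
  refine (d2.ofReal_comp.mul d3).congr_deriv ?_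
  have htc : (heistau m y : ℂ) ≠ 0 := by exact_mod_cast ht.ne'
  push_cast
  field_simp
  ring

theorem heiskappa_bound (m : ℝ) (hm : 1 ≤ m) (s : ℂ) (hs : 0 < s.re) (j : ℕ) (y : ℝ) (hy : (j:ℝ) ≤ y) :
    ‖(((1 / (2 * heistau m y ^ 4) - y ^ 2 / heistau m y ^ 8 : ℝ) : ℂ) -
      s * ((y ^ 2 / (4 * heistau m y ^ 7) : ℝ) : ℂ)) * Complex.exp (-(s * heistau m y))‖ ≤
    (2 + ‖s‖) * (s.re ^ (-(3/2) : ℝ) * ((m ^ 2) ^ (-(9/16) : ℝ) * (1 + (j:ℝ) ^ 2) ^ (-(9/16) : ℝ))) := by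
  have hm0 : 0 < m := by linarith
  have h4 := heistau_four m y
  have ht := heistau_pos m y hm0
  have hj : (0:ℝ) ≤ j := by positivity
  set t := heistau m y with htdef
  have ht1 : 1 ≤ t := by
    by_contra! h
    have : t ^ 4 < 1 := pow_lt_one₀ ht.le h (by norm_num)
    nlinarith
  have hy2 : y ^ 2 ≤ t ^ 4 := by nlinarith
  have hE := heis_exp_bound s.re t (m ^ 2) (1 + (j:ℝ) ^ 2) hs ht (by positivity) (by positivity)
    (by nlinarith) (by nlinarith)
  rw [norm_mul, heis_norm_exp]
  have b1 : ‖((1 / (2 * t ^ 4) - y ^ 2 / t ^ 8 : ℝ) : ℂ) - s * ((y ^ 2 / (4 * t ^ 7) : ℝ) : ℂ)‖ ≤ (2 + ‖s‖) / t ^ 3 := by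
    refine (norm_sub_le _ _).trans ?_
    rw [norm_mul, Complex.norm_real, Complex.norm_real, Real.norm_eq_abs, Real.norm_of_nonneg (by positivity)]
    have a1 : 1 / (2 * t ^ 4) ≤ 1 / t ^ 3 := by
      refine one_div_le_one_div_of_le (by positivity) ?_
      have : t ^ 3 ≤ t ^ 4 := pow_le_pow_right₀ ht1 (by norm_num)
      nlinarith [pow_pos ht 4]
    have a2 : y ^ 2 / t ^ 8 ≤ 1 / t ^ 3 := by
      rw [div_le_div_iff₀ (by positivity) (by positivity), one_mul]
      calc y ^ 2 * t ^ 3 ≤ t ^ 4 * t ^ 3 := by gcongr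
        _ = t ^ 7 := by ring
        _ ≤ t ^ 8 := pow_le_pow_right₀ ht1 (by norm_num)
    have a3 : y ^ 2 / (4 * t ^ 7) ≤ 1 / t ^ 3 := by
      rw [div_le_div_iff₀ (by positivity) (by positivity), one_mul]
      calc y ^ 2 * t ^ 3 ≤ t ^ 4 * t ^ 3 := by gcongr
        _ = t ^ 7 := by ring
        _ ≤ 4 * t ^ 7 := by nlinarith [pow_pos ht 7]
    have a4 : |1 / (2 * t ^ 4) - y ^ 2 / t ^ 8| ≤ 2 * (1 / t ^ 3) := by
      have : 0 ≤ 1 / (2 * t ^ 4) := by positivity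
      have : 0 ≤ y ^ 2 / t ^ 8 := by positivity
      rw [abs_le]; constructor <;> linarith
    calc _ ≤ 2 * (1 / t ^ 3) + ‖s‖ * (1 / t ^ 3) := by gcongr
      _ = _ := by ring
  calc _ ≤ (2 + ‖s‖) / t ^ 3 * exp (-(s.re * t)) := by gcongr
    _ = (2 + ‖s‖) * (exp (-(s.re * t)) / t ^ 3) := by ring
    _ ≤ _ := by gcongr

theorem heis_summable_nat916 : Summable fun n : ℕ ↦ (1 + (n:ℝ) ^ 2) ^ (-(9/16) : ℝ) := by
  have := (Real.summable_nat_rpow (p := -(9/8))).2 (by norm_num)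
  refine Summable.of_norm_bounded_eventually_nat this ?_
  filter_upwards [Filter.eventually_ge_atTop 1] with n hn
  have hn1 : (1:ℝ) ≤ n := by exact_mod_cast hn
  rw [Real.norm_of_nonneg (by positivity)]
  have : (n:ℝ) ^ (-(9/8) : ℝ) = ((n:ℝ) ^ 2) ^ (-(9/16) : ℝ) := by
    rw [← Real.rpow_natCast, ← Real.rpow_mul (by positivity)]; norm_num
  rw [this]
  exact Real.rpow_le_rpow_of_nonpos (by positivity) (by linarith) (by norm_num)

theorem heis_summable_int916 : Summable fun n : ℤ ↦ (1 + (n:ℝ) ^ 2) ^ (-(9/16) : ℝ) := by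
  refine Summable.of_nat_of_neg ?_ ?_
  · simpa using heis_summable_nat916
  · simpa using heis_summable_nat916

theorem heis_summable_q916 : Summable fun z : ℤ × ℤ ↦ if z = 0 then 0 else (heisQ z ^ 2) ^ (-(9/16) : ℝ) := by
  have h := (heis_summable_int916.mul_of_nonneg heis_summable_int916 (fun n ↦ by positivity)
    (fun n ↦ by positivity)).mul_left ((1/4 : ℝ) ^ (-(9/16) : ℝ))
  refine Summable.of_nonneg_of_le (fun z ↦ by positivity) (fun z ↦ ?_) h
  by_cases hz : z = 0
  · rw [if_pos hz]; positivity
  · rw [if_neg hz]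
    have h1 := heisQ_one_le hz
    rw [← Real.mul_rpow (by positivity) (by positivity), ← Real.mul_rpow (by positivity) (by positivity)]
    refine Real.rpow_le_rpow_of_nonpos (by positivity) ?_ (by norm_num)
    unfold heisQ at *
    nlinarith [sq_nonneg (z.1:ℝ), sq_nonneg (z.2:ℝ), mul_nonneg (sq_nonneg (z.1:ℝ)) (sq_nonneg (z.2:ℝ)),
      sq_nonneg ((z.1:ℝ)^2 - (z.2:ℝ)^2)]

theorem heisp_measurable (z : ℤ × ℤ) : Measurable (heisp z) := by
  unfold heisp
  refine Measurable.ite ?_ ?_ measurable_const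
  · exact measurableSet_lt measurable_const (by fun_prop)
  · exact heisrho_measurable.comp (by fun_prop)

open MeasureTheory in
theorem heisp_integrable (z : ℤ × ℤ) (hz : z ≠ 0) (s : ℂ) (hs : 0 < s.re) :
    IntegrableOn (fun t : ℝ ↦ ((heisp z t / t : ℝ) : ℂ) * Complex.exp (-(s * t))) (Set.Ioi (0:ℝ)) := by
  have h1 := heis_cube_integrable 0 s.re hs
  have hq := heisQ_one_le hz
  refine Integrable.mono h1 ?_ ?_
  · have : Measurable fun t : ℝ ↦ ((heisp z t / t : ℝ) : ℂ) * Complex.exp (-(s * t)) :=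
      (Complex.measurable_ofReal.comp ((heisp_measurable z).div measurable_id)).mul (by fun_prop)
    exact this.aestronglyMeasurable
  · filter_upwards [ae_restrict_mem measurableSet_Ioi] with t ht
    have ht : 0 < t := ht
    rw [norm_mul, heis_norm_exp, Complex.norm_real, norm_mul, Real.norm_of_nonneg (exp_pos _).le]
    gcongr
    rw [pow_zero, norm_one, Real.norm_eq_abs, abs_div, abs_of_pos ht]
    by_cases h : heisQ z < t ^ 2
    · have : 1 < t := by nlinarith
      rw [div_le_one ht]
      exact (heisp_abs z t).trans this.le
    · simp [heisp, h]

open MeasureTheory Set in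
theorem heis_z_bound (z : ℤ × ℤ) (hz : z ≠ 0) (s : ℂ) (hs : 0 < s.re) :
    ‖∫ t in Ioi (0:ℝ), ((heisp z t / t : ℝ) : ℂ) * Complex.exp (-(s * t))‖ ≤
      (2 + ‖s‖) * s.re ^ (-(3/2) : ℝ) * (heisQ z ^ 2) ^ (-(9/16) : ℝ) *
        ∑' j : ℕ, (1 + (j:ℝ) ^ 2) ^ (-(9/16) : ℝ) := by
  have hm1 := heisQ_one_le hz
  have hIntg := heisp_integrable z hz s hs
  unfold heisp at *
  generalize heisQ z = m at *
  have hm0 : 0 < m := by linarith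
  have hsub : Ioi (√m) ⊆ Ioi 0 := Ioi_subset_Ioi (Real.sqrt_nonneg m)
  set g : ℝ → ℂ := fun t ↦ (((if m < t ^ 2 then heisrho √(t ^ 4 - m ^ 2) else 0) / t : ℝ) : ℂ) *
    Complex.exp (-(s * t)) with hg
  have e0 : ∫ t in Ioi (0:ℝ), g t = ∫ t in Ioi (√m), g t := by
    refine setIntegral_eq_of_subset_of_forall_diff_eq_zero measurableSet_Ioi hsub fun t ht ↦ ?_
    have h1 : (0:ℝ) < t := ht.1
    have h2 : ¬ (√m < t) := ht.2
    rw [Real.sqrt_lt' h1] at h2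
    simp [hg, h2]
  have hpt : ∀ y ∈ Ioi (0:ℝ), |y / (2 * heistau m y ^ 3)| • g (heistau m y) = (heisrho y : ℂ) * heiskappa m s y := by
    intro y hy
    have hy : 0 < y := hy
    have ht := heistau_pos m y hm0
    have h1 : m < heistau m y ^ 2 := by
      rw [heistau_sq, Real.lt_sqrt hm0.le]; nlinarith
    simp only [hg, h1, if_true, heistau_four, add_sub_cancel_right, Real.sqrt_sq hy.le]
    rw [abs_of_pos (by positivity), Complex.real_smul, heiskappa]
    have htc : (heistau m y : ℂ) ≠ 0 := by exact_mod_cast ht.ne'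
    push_cast
    field_simp
  have e1 : ∫ t in Ioi (√m), g t = ∫ y in Ioi (0:ℝ), (heisrho y : ℂ) * heiskappa m s y := by
    rw [← heistau_image m hm0, integral_image_eq_integral_abs_deriv_smul measurableSet_Ioi
      (fun y _ ↦ (heistau_deriv m y hm0).hasDerivWithinAt) (heistau_inj m)]
    exact setIntegral_congr_fun measurableSet_Ioi hpt
  have hIntg2 : IntegrableOn (fun y ↦ (heisrho y : ℂ) * heiskappa m s y) (Ioi (0:ℝ)) := by
    have h1 : IntegrableOn g (heistau m '' Ioi 0) := by
      rw [heistau_image m hm0]; exact hIntg.mono_set hsub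
    rw [integrableOn_image_iff_integrableOn_abs_deriv_smul measurableSet_Ioi
      (fun y _ ↦ (heistau_deriv m y hm0).hasDerivWithinAt) (heistau_inj m)] at h1
    exact h1.congr_fun hpt measurableSet_Ioi
  rw [e0, e1]
  have hlim := intervalIntegral_tendsto_integral_Ioi 0 hIntg2 tendsto_natCast_atTop_atTop (ι := ℕ)
  refine le_of_tendsto hlim.norm (Filter.Eventually.of_forall fun n ↦ ?_)
  have hii : ∀ k < n, IntervalIntegrable (fun y ↦ (heisrho y : ℂ) * heiskappa m s y) volume ((k:ℕ):ℝ) ((k + 1 : ℕ) : ℝ) := by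
    intro k _
    rw [intervalIntegrable_iff_integrableOn_Ioc_of_le (by push_cast; linarith)]
    refine hIntg2.mono_set fun x hx ↦ ?_
    exact lt_of_le_of_lt (Nat.cast_nonneg k) hx.1
  have hsum := intervalIntegral.sum_integral_adjacent_intervals (a := fun k : ℕ ↦ (k:ℝ)) hii
  rw [Nat.cast_zero] at hsum
  rw [← hsum]
  refine (norm_sum_le _ _).trans ?_
  have hterm : ∀ j ∈ Finset.range n, ‖∫ y in (j:ℝ)..((j + 1 : ℕ) : ℝ), (heisrho y : ℂ) * heiskappa m s y‖ ≤
      (2 + ‖s‖) * s.re ^ (-(3/2) : ℝ) * (m ^ 2) ^ (-(9/16) : ℝ) * (1 + (j:ℝ) ^ 2) ^ (-(9/16) : ℝ) := by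
    intro j _
    refine (heis_jstep _ _ (heiskappa_deriv m hm0 s) j _ (fun y hy ↦
      heiskappa_bound m hm1 s hs j y hy.1)).trans (le_of_eq ?_)
    ring
  refine (Finset.sum_le_sum hterm).trans ?_
  rw [← Finset.mul_sum]
  gcongr
  exact heis_summable_nat916.sum_le_tsum _ (fun j _ ↦ by positivity)

/-- integrability of each summand with a summable bound -/
theorem heisp_norm_le (z : ℤ × ℤ) (hz : z ≠ 0) (t : ℝ) (ht : 0 < t) :
    |heisp z t| ≤ t ^ 4 * (heisQ z ^ 2)⁻¹ := by
  have hq := heisQ_one_le hz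
  by_cases h : heisQ z < t ^ 2
  · refine (heisp_abs z t).trans ?_
    rw [← div_eq_mul_inv, le_div_iff₀ (by positivity)]
    nlinarith
  · simp only [heisp, h, if_false, abs_zero]; positivity

theorem heisP_summable (t : ℝ) (ht : 0 < t) :
    Summable fun z : ℤ × ℤ ↦ if z = 0 then 0 else heisp z t := by
  refine Summable.of_norm_bounded (heis_summable_q2.mul_left (t ^ 4)) fun z ↦ ?_
  split_ifs with hz
  · simp; positivity
  · exact heisp_norm_le z hz t ht

open MeasureTheory Set in
theorem heisP_main (s : ℂ) (hs : 0 < s.re) :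
    IntegrableOn (fun t : ℝ ↦ ((heisP t / t : ℝ) : ℂ) * Complex.exp (-(s * t))) (Ioi (0:ℝ)) ∧
    ‖∫ t in Ioi (0:ℝ), ((heisP t / t : ℝ) : ℂ) * Complex.exp (-(s * t))‖ ≤
      (2 + ‖s‖) * s.re ^ (-(3/2) : ℝ) *
        ((∑' z : ℤ × ℤ, if z = 0 then 0 else (heisQ z ^ 2) ^ (-(9/16) : ℝ)) *
        ∑' j : ℕ, (1 + (j:ℝ) ^ 2) ^ (-(9/16) : ℝ)) := by
  set F : ℤ × ℤ → ℝ → ℂ := fun z t ↦ if z = 0 then 0 else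
    ((heisp z t / t : ℝ) : ℂ) * Complex.exp (-(s * t)) with hF
  have hFi : ∀ z, IntegrableOn (F z) (Ioi (0:ℝ)) := by
    intro z
    by_cases hz : z = 0
    · simp only [hF, hz, if_true]; exact integrableOn_zero
    · simp only [hF, hz, if_false]; exact heisp_integrable z hz s hs
  have h3 := heis_cube_integrable 3 s.re hs
  have hnorm : ∀ z, ∀ t ∈ Ioi (0:ℝ), ‖F z t‖ ≤ (heisQ z ^ 2)⁻¹ * (t ^ 3 * exp (-(s.re * t))) := by
    intro z t ht
    have ht : 0 < t := ht
    by_cases hz : z = 0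
    · simp only [hF, hz, if_true, norm_zero]; positivity
    · simp only [hF, hz, if_false]
      rw [norm_mul, heis_norm_exp, Complex.norm_real, Real.norm_eq_abs, abs_div, abs_of_pos ht, ← mul_assoc]
      gcongr
      rw [div_le_iff₀ ht]
      refine (heisp_norm_le z hz t ht).trans (le_of_eq ?_)
      ring
  have hsumnorm : Summable fun z ↦ ∫ t in Ioi (0:ℝ), ‖F z t‖ := by
    refine Summable.of_nonneg_of_le (fun z ↦ integral_nonneg fun t ↦ norm_nonneg _) (fun z ↦ ?_)
      (heis_summable_q2.mul_right (∫ t in Ioi (0:ℝ), t ^ 3 * exp (-(s.re * t))))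
    rw [← integral_const_mul]
    exact setIntegral_mono_on (hFi z).norm (h3.const_mul _) measurableSet_Ioi (hnorm z)
  have hFP : ∀ t ∈ Ioi (0:ℝ), ∑' z, F z t = ((heisP t / t : ℝ) : ℂ) * Complex.exp (-(s * t)) := by
    intro t ht
    have ht : 0 < t := ht
    have : ∀ z, F z t = (((if z = 0 then 0 else heisp z t) : ℝ) : ℂ) * ((1 / t : ℝ) * Complex.exp (-(s * t))) := by
      intro z
      simp only [hF]
      split_ifs
      · simp
      · push_cast; ring
    simp only [this]
    rw [tsum_mul_right, ← Complex.ofReal_tsum, heisP]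
    push_cast; ring
  have hS := hasSum_integral_of_summable_integral_norm hFi hsumnorm
  rw [setIntegral_congr_fun measurableSet_Ioi hFP] at hS
  constructor
  · have hb : IntegrableOn (fun t : ℝ ↦ (∑' z, (heisQ z ^ 2)⁻¹) * (t ^ 3 * exp (-(s.re * t)))) (Ioi (0:ℝ)) :=
      h3.const_mul _
    refine Integrable.congr ?_ ((ae_restrict_iff' measurableSet_Ioi).2 (Filter.Eventually.of_forall hFP))
    refine Integrable.mono hb ?_ ?_
    · have hm : ∀ z, Measurable (F z) := by
        intro z
        by_cases hz : z = 0
        · simp only [hF, hz, if_true]; exact measurable_const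
        · simp only [hF, hz, if_false]
          exact (Complex.measurable_ofReal.comp ((heisp_measurable z).div measurable_id)).mul (by fun_prop)
      exact (Measurable.tsum hm).aestronglyMeasurable
    · filter_upwards [ae_restrict_mem measurableSet_Ioi] with t ht
      have hbs : Summable fun z ↦ (heisQ z ^ 2)⁻¹ * (t ^ 3 * exp (-(s.re * t))) := heis_summable_q2.mul_right _
      refine (tsum_of_norm_bounded hbs.hasSum fun z ↦ hnorm z t ht).trans ?_
      rw [tsum_mul_right]
      exact le_abs_self _
  · rw [← hS.tsum_eq]
    have hbs := heis_summable_q916.mul_left ((2 + ‖s‖) * s.re ^ (-(3/2) : ℝ) *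
        ∑' j : ℕ, (1 + (j:ℝ) ^ 2) ^ (-(9/16) : ℝ))
    refine (tsum_of_norm_bounded hbs.hasSum fun z ↦ ?_).trans (le_of_eq ?_)
    · by_cases hz : z = 0
      · simp [hF, hz]
      · simp only [hF, hz, if_false]
        refine (heis_z_bound z hz s hs).trans (le_of_eq ?_)
        ring
    · rw [tsum_mul_left]; ring

open Filter Topology MeasureTheory in
theorem heisP_limit (l : ℝ) :
    Tendsto (fun σ : ℝ ↦ (σ:ℂ) ^ 2 * ∫ t in Set.Ioi (0:ℝ),
        ((heisP t / t : ℝ) : ℂ) * Complex.exp (-((σ + 2 * π * l * Complex.I) * t)))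
      (𝓝[>] 0) (𝓝 0) := by
  set G := (∑' z : ℤ × ℤ, if z = 0 then 0 else (heisQ z ^ 2) ^ (-(9/16) : ℝ)) *
        ∑' j : ℕ, (1 + (j:ℝ) ^ 2) ^ (-(9/16) : ℝ) with hG
  have hlim : Tendsto (fun σ : ℝ ↦ (3 + 2 * π * |l|) * G * √σ) (𝓝[>] 0) (𝓝 0) := by
    have : ContinuousAt (fun σ : ℝ ↦ (3 + 2 * π * |l|) * G * √σ) 0 := by fun_prop
    have h := this.tendsto
    simp only [Real.sqrt_zero, mul_zero] at h
    exact h.mono_left nhdsWithin_le_nhds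
  refine squeeze_zero_norm' ?_ hlim
  filter_upwards [Ioo_mem_nhdsGT (zero_lt_one (α := ℝ))] with σ hσ
  have hσ0 : 0 < σ := hσ.1
  have hpi := Real.pi_pos
  have hre : ((σ:ℂ) + 2 * π * l * Complex.I).re = σ := by simp
  have hn : ‖(σ:ℂ) + 2 * π * l * Complex.I‖ ≤ 1 + 2 * π * |l| := by
    refine (norm_add_le _ _).trans ?_
    have : ‖(2 * π * l * Complex.I : ℂ)‖ = 2 * π * |l| := by
      simp [abs_of_pos hpi]
    rw [this, Complex.norm_real, Real.norm_of_nonneg hσ0.le]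
    linarith [hσ.2]
  have h := (heisP_main ((σ:ℂ) + 2 * π * l * Complex.I) (by rw [hre]; exact hσ0)).2
  rw [hre, ← hG] at h
  have hG0 : 0 ≤ G := mul_nonneg (tsum_nonneg fun z ↦ by positivity) (tsum_nonneg fun j ↦ by positivity)
  rw [norm_mul, norm_pow, Complex.norm_real, Real.norm_of_nonneg hσ0.le]
  have hpow : σ ^ 2 * σ ^ (-(3/2) : ℝ) = √σ := by
    rw [Real.sqrt_eq_rpow, ← Real.rpow_natCast, ← Real.rpow_add hσ0]; norm_num
  calc _ ≤ σ ^ 2 * ((2 + (1 + 2 * π * |l|)) * σ ^ (-(3/2) : ℝ) * G) := by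
        gcongr
        refine h.trans ?_
        gcongr
    _ = (3 + 2 * π * |l|) * G * (σ ^ 2 * σ ^ (-(3/2) : ℝ)) := by ring
    _ = _ := by rw [hpow]

noncomputable def heisL (l : ℝ) : ℝ :=
  ∑' z : ℤ × ℤ, if z ≠ 0 ∧ heisQ z = l ^ 2 then -(1 / (2 * π * l ^ 2)) else 0

theorem heisL_coe (l : ℝ) : (∑' z : ℤ × ℤ, if z ≠ 0 ∧ heisQ z = l ^ 2 then
    ((-(1 / (2 * π * l ^ 2)) : ℝ) : ℂ) else 0) = ((heisL l : ℝ) : ℂ) := by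
  unfold heisL
  rw [Complex.ofReal_tsum]
  refine tsum_congr fun z ↦ ?_
  split_ifs <;> simp

theorem heisL_nonpos (l : ℝ) : heisL l ≤ 0 := by
  unfold heisL
  refine tsum_nonpos fun z ↦ ?_
  split_ifs
  · have : 0 ≤ 1 / (2 * π * l ^ 2) := by positivity
    linarith
  · exact le_rfl

theorem heisL_eq_zero (l : ℝ) (h : ∀ n : ℕ, l ^ 2 ≠ n) : heisL l = 0 := by
  unfold heisL
  have : ∀ z : ℤ × ℤ, (if z ≠ 0 ∧ heisQ z = l ^ 2 then -(1 / (2 * π * l ^ 2)) else 0) = 0 := by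
    intro z
    rw [if_neg]
    rintro ⟨_, h2⟩
    exact h _ (h2.symm.trans (heisQ_int z))
  simp only [this, tsum_zero]

theorem heisL_zero : heisL 0 = 0 := by
  unfold heisL
  simp

theorem heisL_prime (p : ℕ) (hp : p.Prime) (h4 : p % 4 = 1) (l : ℝ) (hl : l ^ 2 = p) :
    heisL l ≤ -(1 / (2 * π * p)) := by
  haveI := Fact.mk hp
  obtain ⟨a, b, hab⟩ := Nat.Prime.sq_add_sq (p := p) (by omega)
  have hp0 : (0:ℝ) < p := by exact_mod_cast hp.pos
  set z : ℤ × ℤ := ((a : ℤ), (b : ℤ)) with hz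
  have hq : heisQ z = p := by
    rw [heisQ, hz]
    push_cast
    exact_mod_cast hab
  have hz0 : z ≠ 0 := by
    intro h
    rw [h, heisQ_zero] at hq
    linarith
  unfold heisL
  rw [hl]
  have hs : Summable (fun z : ℤ × ℤ ↦ if z ≠ 0 ∧ heisQ z = p then -(1 / (2 * π * (p:ℝ))) else 0) := by
    refine summable_of_finite_support ((heis_finite p).subset ?_)
    intro w hw
    by_contra hc
    apply hw
    simp only
    rw [if_neg]
    rintro ⟨_, h2⟩
    exact hc h2.le
  have h1 := hs.neg.le_tsum z (fun w _ ↦ by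
    split_ifs
    · have : 0 ≤ 1 / (2 * π * (p:ℝ)) := by positivity
      linarith
    · simp)
  rw [tsum_neg, if_pos ⟨hz0, hq⟩] at h1
  linarith

theorem heisA_mono (t u : ℝ) (ht : 0 ≤ t) (htu : t ≤ u) : heisA t ≤ heisA u := by
  have hs : ∀ v : ℝ, Summable (fun z : ℤ × ℤ ↦ 2 * √(v ^ 2 - heisQ z)) := by
    intro v
    refine summable_of_finite_support ((heis_finite (v^2)).subset ?_)
    intro w hw
    by_contra hc
    apply hw
    simp only [Set.mem_setOf_eq, not_le] at hc
    simp only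
    rw [Real.sqrt_eq_zero_of_nonpos (by linarith), mul_zero]
  unfold heisA
  refine (hs t).tsum_le_tsum (fun z ↦ ?_) (hs u)
  gcongr

theorem heisP_abs (t : ℝ) (ht : 0 < t) :
    |heisP t| ≤ t ^ 4 * ∑' z : ℤ × ℤ, (heisQ z ^ 2)⁻¹ := by
  unfold heisP
  rw [← tsum_mul_left, ← Real.norm_eq_abs]
  refine tsum_of_norm_bounded ((heis_summable_q2.mul_left _).hasSum) fun z ↦ ?_
  split_ifs with h
  · simp; positivity
  · exact heisp_norm_le z h t ht

noncomputable def heisH (t : ℝ) : ℝ := √2 * heisD t + heisP t / t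

theorem heisH_bound (e C T : ℝ) (he : |e| = 1)
    (h : ∀ t, T < t → e * (((N t : ℝ) - π ^ 2 / 2 * t ^ 4) / t ^ 2) ≤ C) :
    ∃ K : ℝ, 0 ≤ K ∧ ∀ t, 0 < t → e * heisH t ≤ K * t + K := by
  set T0 := max T 1 with hT0
  have hT1 : 1 ≤ T0 := le_max_right _ _
  set S := ∑' z : ℤ × ℤ, (heisQ z ^ 2)⁻¹ with hS
  have hS0 : 0 ≤ S := tsum_nonneg fun z ↦ by positivity
  set K1 := √2 * (heisA T0 + 4 * π / 3 * T0 ^ 3) + T0 ^ 3 * S with hK1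
  have hA0 : 0 ≤ heisA T0 := heisA_nonneg _
  have hK10 : 0 ≤ K1 := by positivity
  set K2 := |C| + 14 * √2 + 1 with hK2
  have hK20 : 0 ≤ K2 := by positivity
  refine ⟨K1 + K2, by positivity, fun t ht ↦ ?_⟩
  by_cases htT : t ≤ T0
  · have h1 : e * heisH t ≤ |heisH t| := by
      calc _ ≤ |e * heisH t| := le_abs_self _
        _ = _ := by rw [abs_mul, he, one_mul]
    have h2 : |heisH t| ≤ √2 * |heisD t| + |heisP t| / t := by
      unfold heisH
      refine (abs_add_le _ _).trans ?_
      rw [abs_mul, abs_div, abs_of_pos ht, abs_of_nonneg (Real.sqrt_nonneg 2)]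
    have h3 : |heisD t| ≤ heisA T0 + 4 * π / 3 * T0 ^ 3 := by
      have a1 := heisA_mono t T0 ht.le htT
      have a2 := heisA_nonneg t
      have a3 : 4 * π / 3 * t ^ 3 ≤ 4 * π / 3 * T0 ^ 3 := by gcongr
      have a4 : 0 ≤ 4 * π / 3 * t ^ 3 := by positivity
      unfold heisD
      rw [abs_le]
      constructor <;> linarith
    have h4 : |heisP t| / t ≤ T0 ^ 3 * S := by
      rw [div_le_iff₀ ht]
      refine (heisP_abs t ht).trans ?_
      calc t ^ 4 * S = t ^ 3 * S * t := by ring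
        _ ≤ _ := by gcongr
    have h5 : √2 * |heisD t| ≤ √2 * (heisA T0 + 4 * π / 3 * T0 ^ 3) := by gcongr
    have h6 : 0 ≤ (K1 + K2) * t := by positivity
    linarith
  · push Not at htT
    have ht1 : 1 < t := lt_of_le_of_lt hT1 htT
    have hTt : T < t := lt_of_le_of_lt (le_max_left _ _) htT
    have h1 := h t hTt
    have h2 := heis_decomp t ht
    set E := (N t : ℝ) - π ^ 2 / 2 * t ^ 4 with hE
    have h3 : E - √2 * t * heisD t - heisP t = E - t * heisH t := by
      unfold heisH
      field_simp
      ring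
    rw [h3] at h2
    have h4 : e * E ≤ C * t ^ 2 := by
      have : e * (E / t ^ 2) = e * E / t ^ 2 := by ring
      rw [this, div_le_iff₀ (by positivity)] at h1
      exact h1
    have h5 : e * (t * heisH t) ≤ e * E + (7 * √2 * (t^2+1) + 1) := by
      have : -(e * (E - t * heisH t)) ≤ |e * (E - t * heisH t)| := neg_le_abs _
      rw [abs_mul, he, one_mul] at this
      linarith
    have h6 : t * (e * heisH t) ≤ t * ((K1 + K2) * t + (K1 + K2)) := by
      have a1 : C * t ^ 2 ≤ |C| * t ^ 2 := by gcongr; exact le_abs_self _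
      have a2 : 7 * √2 * (t^2+1) + 1 ≤ (14 * √2 + 1) * t ^ 2 := by
        have : 0 ≤ √2 := Real.sqrt_nonneg _
        nlinarith [mul_nonneg this (by nlinarith : 0 ≤ t ^ 2 - 1)]
      have a3 : 0 ≤ K1 * t ^ 2 := by positivity
      have a4 : 0 ≤ t * (K1 + K2) := by positivity
      have a5 : t * (e * heisH t) ≤ K2 * t ^ 2 := by rw [hK2]; linarith
      linarith
    exact le_of_mul_le_mul_left h6 ht

/-- Laplace-type limit predicate. -/
def heisLap (f : ℝ → ℝ) (L : ℝ → ℝ) : Prop :=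
  (∀ s : ℂ, 0 < s.re → MeasureTheory.IntegrableOn
    (fun t : ℝ ↦ (f t : ℂ) * Complex.exp (-(s * t))) (Set.Ioi 0)) ∧
  ∀ l : ℝ, Filter.Tendsto (fun σ : ℝ ↦ (σ:ℂ) ^ 2 * ∫ t in Set.Ioi (0:ℝ), (f t : ℂ) *
    Complex.exp (-((σ + 2 * π * l * Complex.I) * t))) (nhdsWithin 0 (Set.Ioi 0)) (nhds ((L l : ℝ) : ℂ))

theorem heis_re_pos (σ l : ℝ) (h : 0 < σ) : 0 < ((σ:ℂ) + 2 * π * l * Complex.I).re := by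
  simpa using h

theorem heisLap_add {f g L M : ℝ → ℝ} (hf : heisLap f L) (hg : heisLap g M) :
    heisLap (fun t ↦ f t + g t) (fun l ↦ L l + M l) := by
  constructor
  · intro s hs
    refine ((hf.1 s hs).add (hg.1 s hs)).congr (Filter.Eventually.of_forall fun t ↦ ?_)
    simp [add_mul]
  · intro l
    have h := (hf.2 l).add (hg.2 l)
    rw [← Complex.ofReal_add] at h
    refine h.congr' ?_
    filter_upwards [self_mem_nhdsWithin] with σ hσ
    rw [← mul_add, ← MeasureTheory.integral_add (hf.1 _ (heis_re_pos σ l hσ)) (hg.1 _ (heis_re_pos σ l hσ))]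
    congr 2
    ext t
    push_cast
    ring

theorem heisLap_smul {f L : ℝ → ℝ} (c : ℝ) (hf : heisLap f L) :
    heisLap (fun t ↦ c * f t) (fun l ↦ c * L l) := by
  constructor
  · intro s hs
    refine ((hf.1 s hs).const_mul (c:ℂ)).congr (Filter.Eventually.of_forall fun t ↦ ?_)
    simp [mul_assoc]
  · intro l
    have h := (hf.2 l).const_mul (c:ℂ)
    rw [← Complex.ofReal_mul] at h
    refine h.congr fun σ ↦ ?_
    rw [mul_left_comm, ← MeasureTheory.integral_const_mul]
    congr 2
    ext t
    push_cast
    ring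

theorem heisLap_D : heisLap heisD heisL := by
  constructor
  · intro s hs
    exact heis_integrable_mul_exp _ s (heisD_integrable _ hs) heisD_measurable
  · intro l
    have := heisD_limit l
    rwa [heisL_coe] at this

theorem heisLap_P : heisLap (fun t ↦ heisP t / t) (fun _ ↦ 0) := by
  constructor
  · intro s hs
    exact (heisP_main s hs).1
  · intro l
    simpa using heisP_limit l

theorem heisLap_pow (n : ℕ) (hn : n ≤ 1) :
    heisLap (fun t ↦ t ^ n) (fun l ↦ if l = 0 ∧ n = 1 then 1 else 0) := by
  constructor
  · intro s hs
    exact heis_integrable_mul_exp _ s (heis_cube_integrable n _ hs) (by fun_prop)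
  · intro l
    have key : Filter.Tendsto (fun σ : ℝ ↦ (σ:ℂ) ^ 2 * (n.factorial / ((σ:ℂ) + 2 * π * l * Complex.I) ^ (n+1)))
        (nhdsWithin 0 (Set.Ioi 0)) (nhds (((if l = 0 ∧ n = 1 then 1 else 0 : ℝ)) : ℂ)) := by
      by_cases hl : l = 0
      · subst hl
        interval_cases n
        · have : Filter.Tendsto (fun σ : ℝ ↦ (σ:ℂ)) (nhdsWithin 0 (Set.Ioi 0)) (nhds ((0:ℝ):ℂ)) :=
            (Complex.continuous_ofReal.tendsto 0).mono_left nhdsWithin_le_nhds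
          simp only [Complex.ofReal_zero] at this
          simp only [zero_ne_one, and_false, if_false, Complex.ofReal_zero]
          refine this.congr' ?_
          filter_upwards [self_mem_nhdsWithin] with σ hσ
          have : (σ:ℂ) ≠ 0 := by exact_mod_cast (ne_of_gt hσ)
          simp
          field_simp
        · simp only [and_self, if_true, Complex.ofReal_one]
          refine tendsto_const_nhds.congr' ?_
          filter_upwards [self_mem_nhdsWithin] with σ hσ
          have : (σ:ℂ) ≠ 0 := by exact_mod_cast (ne_of_gt hσ)
          simp
          field_simp
      · rw [if_neg (by tauto)]
        have hc : ContinuousAt (fun σ : ℝ ↦ (σ:ℂ) ^ 2 * (n.factorial / ((σ:ℂ) + 2 * π * l * Complex.I) ^ (n+1))) 0 := by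
          have : ((0:ℝ):ℂ) + 2 * π * l * Complex.I ≠ 0 := by
            simp [hl, Real.pi_ne_zero]
          refine ContinuousAt.mul (by fun_prop) (ContinuousAt.div (by fun_prop) (by fun_prop) (pow_ne_zero _ this))
        have := hc.tendsto.mono_left (nhdsWithin_le_nhds (s := Set.Ioi 0))
        simpa using this
    refine key.congr' ?_
    filter_upwards [self_mem_nhdsWithin] with σ hσ
    rw [← heis_pow_laplace n _ (heis_re_pos σ l hσ)]

theorem heisLap_pos {α : Type*} (S : Finset α) (c : α → ℝ) (fr : α → ℝ) (g L k : ℝ → ℝ)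
    (hg : heisLap g L) (hg0 : ∀ t, 0 < t → 0 ≤ g t) (hk : ∀ t, 0 ≤ k t)
    (hexp : ∀ t : ℝ, (k t : ℂ) = ∑ x ∈ S, (c x : ℂ) * Complex.exp (-(2 * π * fr x * Complex.I * t))) :
    0 ≤ ∑ x ∈ S, c x * L (fr x) := by
  have h1 : Filter.Tendsto (fun σ : ℝ ↦ (∑ x ∈ S, (c x:ℂ) * ((σ:ℂ) ^ 2 * ∫ t in Set.Ioi (0:ℝ), (g t : ℂ) *
    Complex.exp (-((σ + 2 * π * fr x * Complex.I) * t))))) (nhdsWithin 0 (Set.Ioi 0))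
      (nhds (∑ x ∈ S, (c x : ℂ) * ((L (fr x) : ℝ) : ℂ))) :=
    tendsto_finset_sum _ fun x _ ↦ (hg.2 (fr x)).const_mul _
  have h2 := (Complex.continuous_re.tendsto _).comp h1
  have h3 : (∑ x ∈ S, (c x : ℂ) * ((L (fr x) : ℝ) : ℂ)).re = ∑ x ∈ S, c x * L (fr x) := by
    rw [← Complex.ofReal_re (∑ x ∈ S, c x * L (fr x))]
    push_cast
    rfl
  rw [h3] at h2
  refine ge_of_tendsto h2 ?_
  filter_upwards [self_mem_nhdsWithin] with σ hσ
  have h4 : (∑ x ∈ S, (c x:ℂ) * ((σ:ℂ) ^ 2 * ∫ t in Set.Ioi (0:ℝ), (g t : ℂ) *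
    Complex.exp (-((σ + 2 * π * fr x * Complex.I) * t)))) =
      ((σ ^ 2 * ∫ t in Set.Ioi (0:ℝ), g t * k t * Real.exp (-(σ * t)) : ℝ) : ℂ) := by
    rw [Complex.ofReal_mul, ← integral_complex_ofReal]
    have : ∀ x ∈ S, (c x:ℂ) * ((σ:ℂ) ^ 2 * ∫ t in Set.Ioi (0:ℝ), (g t : ℂ) *
      Complex.exp (-((σ + 2 * π * fr x * Complex.I) * t))) = (σ:ℂ) ^ 2 * ∫ t in Set.Ioi (0:ℝ), (c x : ℂ) * ((g t : ℂ) *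
      Complex.exp (-((σ + 2 * π * fr x * Complex.I) * t))) := by
      intro x _
      rw [MeasureTheory.integral_const_mul]
      ring
    rw [Finset.sum_congr rfl this, ← Finset.mul_sum, ← MeasureTheory.integral_finset_sum]
    · push_cast
      congr 2
      ext t
      rw [hexp, Finset.mul_sum, Finset.sum_mul]
      refine Finset.sum_congr rfl fun x _ ↦ ?_
      have : Complex.exp (-((σ + 2 * π * fr x * Complex.I) * t)) =
        Complex.exp (-(2 * π * fr x * Complex.I * t)) * Complex.exp (-(σ * t)) := by
        rw [← Complex.exp_add]
        congr 1
        ring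
      rw [this]
      ring
    · intro x _
      exact (hg.1 _ (heis_re_pos σ _ hσ)).const_mul _
  simp only [Function.comp]
  rw [h4, Complex.ofReal_re]
  refine mul_nonneg (sq_nonneg _) (MeasureTheory.setIntegral_nonneg measurableSet_Ioi fun t ht ↦ ?_)
  exact mul_nonneg (mul_nonneg (hg0 t ht) (hk t)) (Real.exp_pos _).le

noncomputable def heisRieszC (e : ℝ) (k : ℤ) : ℝ := if k = 0 then 1 else -e / 2

theorem heisRieszC_expand (e θ : ℝ) : ((1 - e * Real.cos θ : ℝ) : ℂ) =
    ∑ k ∈ ({-1, 0, 1} : Finset ℤ), (heisRieszC e k : ℂ) * Complex.exp (-(k * θ * Complex.I)) := by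
  rw [Finset.sum_insert (by decide), Finset.sum_insert (by decide), Finset.sum_singleton]
  simp only [heisRieszC]
  push_cast
  rw [Complex.cos]
  norm_num
  ring

noncomputable def heisfr (P : Finset ℕ) (x : P → ℤ) : ℝ := ∑ i : P, (x i : ℝ) * √((i:ℕ):ℝ)

theorem heis_prod_expand (P : Finset ℕ) (e t : ℝ) :
    ((∏ i : P, (1 - e * Real.cos (2 * π * √((i:ℕ):ℝ) * t)) : ℝ) : ℂ) =
    ∑ x ∈ Fintype.piFinset (fun _ : P ↦ ({-1, 0, 1} : Finset ℤ)),
      ((∏ i : P, heisRieszC e (x i) : ℝ) : ℂ) * Complex.exp (-(2 * π * heisfr P x * Complex.I * t)) := by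
  rw [Complex.ofReal_prod]
  simp only [heisRieszC_expand]
  rw [Finset.prod_univ_sum]
  refine Finset.sum_congr rfl fun x _ ↦ ?_
  rw [Finset.prod_mul_distrib, ← Complex.exp_sum, Complex.ofReal_prod]
  congr 2
  unfold heisfr
  push_cast
  rw [Finset.sum_neg_distrib, Finset.mul_sum, Finset.sum_mul, Finset.sum_mul]
  congr 1
  refine Finset.sum_congr rfl fun i _ ↦ ?_
  ring

theorem heisfr_indep (P : Finset ℕ) (hP : ∀ p ∈ P, p.Prime) (x : P → ℤ) (n : ℕ)
    (h : heisfr P x ^ 2 = n) (i j : P) (hij : i ≠ j) : x i = 0 ∨ x j = 0 := by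
  classical
  have h1 := heis_indep P hP (fun p ↦ if hp : p ∈ P then x ⟨p, hp⟩ else 0) n (by
    rw [← h, heisfr, ← Finset.sum_coe_sort P]
    congr 1
    refine Finset.sum_congr rfl fun i _ ↦ ?_
    simp) i i.2 j j.2 (fun hc ↦ hij (Subtype.ext hc))
  simpa using h1

theorem heisRiesz_term (P : Finset ℕ) (hP : ∀ p ∈ P, p.Prime ∧ p % 4 = 1) (e K : ℝ) (he : e * e = 1)
    (x : P → ℤ) (hx : x ∈ Fintype.piFinset (fun _ : P ↦ ({-1, 0, 1} : Finset ℤ))) :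
    (∏ i : P, heisRieszC e (x i)) * ((if heisfr P x = 0 then K else 0) - e * √2 * heisL (heisfr P x)) ≤
    (if x = 0 then K else 0) + ∑ i : P, if x = Pi.single i 1 then -(√2 / (4 * π * (i:ℕ))) else 0 := by
  classical
  by_cases hx0 : x = 0
  · have h1 : heisfr P x = 0 := by simp [hx0, heisfr]
    rw [h1, if_pos rfl, heisL_zero, if_pos hx0, Finset.sum_eq_zero]
    · simp [hx0, heisRieszC]
    · intro i _
      rw [if_neg]
      rw [hx0]
      intro h
      have := congrFun h i
      simp at this
  · rw [if_neg hx0]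
    obtain ⟨i, hi⟩ : ∃ i, x i ≠ 0 := by
      by_contra hc
      push Not at hc
      exact hx0 (funext hc)
    by_cases h2 : ∃ j, j ≠ i ∧ x j ≠ 0
    · obtain ⟨j, hji, hj⟩ := h2
      have hn : ∀ n : ℕ, heisfr P x ^ 2 ≠ n := by
        intro n hn
        rcases heisfr_indep P (fun p hp ↦ (hP p hp).1) x n hn i j hji.symm with h | h
        · exact hi h
        · exact hj h
      have hne : heisfr P x ≠ 0 := by
        intro h
        exact hn 0 (by simp [h])
      rw [if_neg hne, heisL_eq_zero _ hn, Finset.sum_eq_zero]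
      · simp
      · intro k _
        rw [if_neg]
        rintro rfl
        by_cases hk : k = i
        · subst hk; simp [Pi.single_apply, hji] at hj
        · simp [Pi.single_apply, Ne.symm hk] at hi
    · push Not at h2
      have hxs : x = Pi.single i (x i) := by
        funext j
        by_cases hj : j = i
        · subst hj; simp
        · rw [h2 j hj]; simp [hj]
      have hfr : heisfr P x = x i * √((i:ℕ):ℝ) := by
        unfold heisfr
        rw [Finset.sum_eq_single i]
        · intro j _ hj
          rw [h2 j hj]; simp
        · simp
      have hprod : (∏ i : P, heisRieszC e (x i)) = -e / 2 := by
        rw [Finset.prod_eq_single i]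
        · simp [heisRieszC, hi]
        · intro j _ hj
          rw [h2 j hj]; simp [heisRieszC]
        · simp
      have hxi : x i ^ 2 = 1 := by
        have := Fintype.mem_piFinset.1 hx i
        simp only [Finset.mem_insert, Finset.mem_singleton] at this
        rcases this with h | h | h
        · rw [h]; norm_num
        · exact absurd h hi
        · rw [h]; norm_num
      have hp := hP i i.2
      have hp0 : (0:ℝ) < ((i:ℕ):ℝ) := by exact_mod_cast hp.1.pos
      have hsq : heisfr P x ^ 2 = ((i:ℕ):ℝ) := by
        rw [hfr, mul_pow, Real.sq_sqrt hp0.le]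
        have : ((x i : ℤ):ℝ) ^ 2 = 1 := by exact_mod_cast hxi
        rw [this, one_mul]
      have hne : heisfr P x ≠ 0 := by
        intro h
        rw [h] at hsq
        norm_num at hsq
        linarith
      have hL := heisL_prime i hp.1 hp.2 _ hsq
      rw [if_neg hne, hprod]
      have hl : -e / 2 * (0 - e * √2 * heisL (heisfr P x)) = √2 / 2 * heisL (heisfr P x) := by
        linear_combination (√2 / 2 * heisL (heisfr P x)) * he
      rw [hl]
      have h3 : √2 / 2 * heisL (heisfr P x) ≤ -(√2 / (4 * π * (i:ℕ))) := by
        calc _ ≤ √2 / 2 * -(1 / (2 * π * (i:ℕ))) := by gcongr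
          _ = _ := by field_simp; ring
      refine h3.trans ?_
      rw [zero_add, Finset.sum_eq_single i]
      · split_ifs
        · exact le_rfl
        · have : 0 ≤ √2 / (4 * π * ((i:ℕ):ℝ)) := by positivity
          linarith
      · intro j _ hj
        rw [if_neg]
        intro h
        have := congrFun h i
        rw [Pi.single_apply, if_neg hj.symm] at this
        exact hi this
      · simp

theorem heis_contra (e C T : ℝ) (he : e = 1 ∨ e = -1)
    (h : ∀ t, T < t → e * (((N t : ℝ) - π ^ 2 / 2 * t ^ 4) / t ^ 2) ≤ C) : False := by
  classical
  have he2 : e * e = 1 := by rcases he with h | h <;> rw [h] <;> norm_num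
  have he1 : |e| = 1 := by rcases he with h | h <;> rw [h] <;> norm_num
  obtain ⟨K, hK0, hK⟩ := heisH_bound e C T he1 h
  obtain ⟨P, hP, hB⟩ := heis_primes_large (K * (4 * π) / √2)
  have hlap := heisLap_add (heisLap_add (heisLap_smul K (heisLap_pow 1 le_rfl))
    (heisLap_smul K (heisLap_pow 0 zero_le_one)))
    (heisLap_smul (-e) (heisLap_add (heisLap_smul √2 heisLap_D) heisLap_P))
  have hpos := heisLap_pos (Fintype.piFinset (fun _ : P ↦ ({-1, 0, 1} : Finset ℤ)))
    (fun x ↦ ∏ i : P, heisRieszC e (x i)) (heisfr P) _ _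
    (fun t ↦ ∏ i : P, (1 - e * Real.cos (2 * π * √((i:ℕ):ℝ) * t))) hlap
    (by
      intro t ht
      have := hK t ht
      unfold heisH at this
      simp only [pow_one, pow_zero]
      linarith)
    (by
      intro t
      refine Finset.prod_nonneg fun i _ ↦ ?_
      have h1 := Real.neg_one_le_cos (2 * π * √((i:ℕ):ℝ) * t)
      have h2 := Real.cos_le_one (2 * π * √((i:ℕ):ℝ) * t)
      rcases he with h | h <;> rw [h] <;> linarith)
    (heis_prod_expand P e)
  have hle : ∀ x ∈ Fintype.piFinset (fun _ : P ↦ ({-1, 0, 1} : Finset ℤ)), _ :=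
    fun x hx ↦ heisRiesz_term P hP e K he2 x hx
  have hsum := Finset.sum_le_sum hle
  rw [Finset.sum_add_distrib, Finset.sum_comm (t := Finset.univ)] at hsum
  have hz : (∑ x ∈ Fintype.piFinset (fun _ : P ↦ ({-1, 0, 1} : Finset ℤ)),
      if x = 0 then K else 0) = K := by
    rw [Finset.sum_ite_eq', if_pos]
    simp [Fintype.mem_piFinset]
  have hs : ∀ i : P, (∑ x ∈ Fintype.piFinset (fun _ : P ↦ ({-1, 0, 1} : Finset ℤ)),
      if x = Pi.single i 1 then -(√2 / (4 * π * ((i:ℕ):ℝ))) else 0) = -(√2 / (4 * π * ((i:ℕ):ℝ))) := by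
    intro i
    rw [Finset.sum_ite_eq', if_pos]
    rw [Fintype.mem_piFinset]
    intro j
    by_cases hj : j = i
    · subst hj; simp
    · simp [hj]
  rw [hz, Finset.sum_congr rfl (fun i _ ↦ hs i)] at hsum
  have hfin : 0 ≤ K + ∑ i : P, -(√2 / (4 * π * ((i:ℕ):ℝ))) := by
    refine hpos.trans (le_trans (le_of_eq ?_) hsum)
    refine Finset.sum_congr rfl fun x _ ↦ ?_
    by_cases h0 : heisfr P x = 0
    · simp [h0]; left; ring
    · simp [h0]; left; ring
  have hc : ∑ i : P, -(√2 / (4 * π * ((i:ℕ):ℝ))) = -(√2 / (4 * π) * ∑ p ∈ P, (1:ℝ) / p) := by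
    rw [Finset.sum_coe_sort P (fun p ↦ -(√2 / (4 * π * (p:ℝ)))), Finset.mul_sum, ← Finset.sum_neg_distrib]
    refine Finset.sum_congr rfl fun p _ ↦ ?_
    rw [div_mul_div_comm, mul_one]
  rw [hc] at hfin
  have : √2 / (4 * π) * (K * (4 * π) / √2) < √2 / (4 * π) * ∑ p ∈ P, (1:ℝ) / p := by
    gcongr
  have h5 : √2 / (4 * π) * (K * (4 * π) / √2) = K := by
    field_simp
  linarith

/-- `limsup_{t→∞} (N(t) − (π²/2)t⁴)/t² = +∞` and
`liminf_{t→∞} (N(t) − (π²/2)t⁴)/t² = −∞`. -/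
theorem heisenberg_error_omega_pm :
    (∀ C : ℝ, ∀ T : ℝ, ∃ t : ℝ, T < t ∧
      C < ((N t : ℝ) - Real.pi ^ 2 / 2 * t ^ 4) / t ^ 2) ∧
    (∀ C : ℝ, ∀ T : ℝ, ∃ t : ℝ, T < t ∧
      ((N t : ℝ) - Real.pi ^ 2 / 2 * t ^ 4) / t ^ 2 < C) := by
  constructor
  · intro C T
    by_contra hc
    push Not at hc
    refine heis_contra 1 C T (Or.inl rfl) fun t ht ↦ ?_
    rw [one_mul]
    exact hc t ht
  · intro C T
    by_contra hc
    push Not at hc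
    refine heis_contra (-1) (-C) T (Or.inr rfl) fun t ht ↦ ?_
    have := hc t ht
    linarith
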